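/- arXiv:1302.0225 — 2 statements merged into one kernel-verified Lean document; each statement's English description precedes it below -/
import Mathlib

section
/- Degenerate local limit theorem: in the stationary random conductance model on ℤ, if 1/c is integrable but ∫c̄ dμ = +∞, then for μ-a.e. ω: lim_{n→∞} √(2n)·P_0^ω[S_{2n}=0] = 0; while if c̄ is integrable but ∫(1/c)dμ = +∞, then for μ-a.e. ω: lim_{n→∞} √(2n)·P_0^ω[S_{2n}=0] = +∞. -/
open MeasureTheory Filter
open scoped BigOperators ENNReal

/-- `cbar κ x = c(x−1,x) + c(x,x+1)`, where `κ x` denotes the conductance of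
the edge `{x, x+1}` of `ℤ`. -/
noncomputable def cbar (κ : ℤ → ℝ) (x : ℤ) : ℝ := κ (x - 1) + κ x

/-- One-step transition probabilities of the nearest-neighbour conductance walk. -/
noncomputable def step (κ : ℤ → ℝ) (x y : ℤ) : ℝ :=
  if y = x + 1 then κ x / cbar κ x
  else if y = x - 1 then κ (x - 1) / cbar κ x else 0

/-- `walk κ n x y = P_x[S_n = y]`, the `n`-step transition probabilities. -/
noncomputable def walk (κ : ℤ → ℝ) : ℕ → ℤ → ℤ → ℝ
  | 0, x, y => if y = x then 1 else 0
  | (n+1), x, y =>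
      walk κ n x (y - 1) * step κ (y - 1) y + walk κ n x (y + 1) * step κ (y + 1) y

/-- The heat kernel `h_n(x) = P_0[S_n = x] / c̄(x)`. -/
noncomputable def heatK (κ : ℤ → ℝ) (n : ℕ) (x : ℤ) : ℝ := walk κ n 0 x / cbar κ x

/-- The energy `‖h_n‖² = Σ_x h_n(x)² c̄(x)`. -/
noncomputable def energy (κ : ℤ → ℝ) (n : ℕ) : ℝ :=
  ∑' x : ℤ, (heatK κ n x) ^ 2 * cbar κ x

/-- The stationary environment of conductances seen from `ω`:
`c(x,x+1)(ω) = c(Tˣ ω)`. -/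
noncomputable def envC {Ω : Type*} (T : Equiv.Perm Ω) (c : Ω → ℝ) (ω : Ω) : ℤ → ℝ :=
  fun x => c ((T ^ x) ω)


/-- Running maximum of Birkhoff sums. -/
noncomputable def runMax {Ω : Type*} (T : Ω → Ω) (f : Ω → ℝ) : ℕ → Ω → ℝ
  | 0, _ => 0
  | (n+1), x => max 0 (f x + runMax T f n (T x))

lemma runMax_nonneg {Ω : Type*} (T : Ω → Ω) (f : Ω → ℝ) (n : ℕ) (x : Ω) :
    0 ≤ runMax T f n x := by
  cases n <;> simp [runMax]

lemma runMax_mono_succ {Ω : Type*} (T : Ω → Ω) (f : Ω → ℝ) (n : ℕ) :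
    ∀ x : Ω, runMax T f n x ≤ runMax T f (n+1) x := by
  induction n with
  | zero => intro x; simp [runMax]
  | succ n ih =>
    intro x
    have := ih (T x)
    rw [runMax, runMax]
    gcongr

lemma runMax_mono {Ω : Type*} (T : Ω → Ω) (f : Ω → ℝ) (x : Ω) :
    Monotone (fun n => runMax T f n x) :=
  monotone_nat_of_le_succ (fun n => runMax_mono_succ T f n x)

lemma sum_le_runMax {Ω : Type*} (T : Ω → Ω) (f : Ω → ℝ) (n : ℕ) :
    ∀ x : Ω, ∑ i ∈ Finset.range n, f (T^[i] x) ≤ runMax T f n x := by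
  induction n with
  | zero => intro x; simp [runMax]
  | succ n ih =>
    intro x
    rw [Finset.sum_range_succ', runMax]
    have := ih (T x)
    simp only [Function.iterate_succ_apply, Function.iterate_zero, id]
    refine le_max_of_le_right ?_
    linarith

lemma runMax_measurable {Ω : Type*} [MeasurableSpace Ω] {T : Ω → Ω} {f : Ω → ℝ}
    (hT : Measurable T) (hf : Measurable f) (n : ℕ) : Measurable (runMax T f n) := by
  induction n with
  | zero => exact measurable_const
  | succ n ih => exact measurable_const.max (hf.add (ih.comp hT))

lemma runMax_integrable {Ω : Type*} [MeasurableSpace Ω] {μ : Measure Ω} [IsProbabilityMeasure μ]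
    {T : Ω → Ω} {f : Ω → ℝ}
    (hT : MeasurePreserving T μ μ) (hf : Integrable f μ) (n : ℕ) :
    Integrable (runMax T f n) μ := by
  induction n with
  | zero => exact integrable_const 0
  | succ n ih =>
    exact (integrable_const (0:ℝ)).sup (hf.add (hT.integrable_comp_of_integrable ih))

lemma ergodic_bdd {Ω : Type*} [MeasurableSpace Ω] {μ : Measure Ω} [IsProbabilityMeasure μ]
    {T : Ω → Ω} (hT : Ergodic T μ) {f : Ω → ℝ} (hfm : Measurable f) (hf : Integrable f μ)
    (hneg : ∫ x, f x ∂μ < 0) :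
    ∀ᵐ x ∂μ, ∃ D : ℝ, ∀ n : ℕ, ∑ i ∈ Finset.range n, f (T^[i] x) ≤ D := by
  set B : Set Ω := {x | ∀ k : ℕ, ∃ n : ℕ, (k:ℝ) ≤ runMax T f n x} with hB
  have hBm : MeasurableSet B := by
    have : B = ⋂ k : ℕ, ⋃ n : ℕ, {x | (k:ℝ) ≤ runMax T f n x} := by
      ext x; simp [hB]
    rw [this]
    exact MeasurableSet.iInter fun k => MeasurableSet.iUnion fun n =>
      measurableSet_le measurable_const (runMax_measurable hT.measurable hfm n)
  have hBi : T ⁻¹' B = B := by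
    ext x
    simp only [hB, Set.mem_preimage, Set.mem_ofPred_eq]
    constructor
    · intro h k
      obtain ⟨l, hl⟩ := exists_nat_ge ((k:ℝ) - f x)
      obtain ⟨n, hn⟩ := h l
      refine ⟨n+1, ?_⟩
      rw [runMax]
      refine le_max_of_le_right ?_
      linarith
    · intro h k
      obtain ⟨l, hl⟩ := exists_nat_ge (max 1 ((k:ℝ) + f x))
      obtain ⟨n, hn⟩ := h l
      have h1 := le_trans (le_max_left _ _) hl
      have h2 := le_trans (le_max_right _ _) hl
      cases n with
      | zero => simp only [runMax] at hn; linarith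
      | succ n =>
        refine ⟨n, ?_⟩
        rw [runMax] at hn
        rcases le_max_iff.1 hn with h | h <;> linarith
  rcases hT.toPreErgodic.ae_mem_or_ae_notMem hBm hBi with h | h
  · exfalso
    have key : ∀ n, 0 ≤ ∫ x, max (f x) (- runMax T f n (T x)) ∂μ := by
      intro n
      have e : ∀ x, max (f x) (- runMax T f n (T x))
          = runMax T f (n+1) x - runMax T f n (T x) := by
        intro x
        rw [runMax]
        rcases le_total 0 (f x + runMax T f n (T x)) with h0 | h0
        · rw [max_eq_right h0, max_eq_left (by linarith)]; ring
        · rw [max_eq_left h0, max_eq_right (by linarith)]; ring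
      simp_rw [e]
      have i2 : Integrable (fun x => runMax T f n (T x)) μ :=
        (hT.toMeasurePreserving.integrable_comp_of_integrable
          (runMax_integrable hT.toMeasurePreserving hf n))
      rw [integral_sub (runMax_integrable hT.toMeasurePreserving hf _) i2]
      have e2 : ∫ x, runMax T f n (T x) ∂μ = ∫ x, runMax T f n x ∂μ := by
        rw [← integral_map hT.measurable.aemeasurable, hT.map_eq]
        rw [hT.map_eq]
        exact (runMax_measurable hT.measurable hfm n).aestronglyMeasurable
      rw [e2, sub_nonneg]
      exact integral_mono (runMax_integrable hT.toMeasurePreserving hf _)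
        (runMax_integrable hT.toMeasurePreserving hf _) (runMax_mono_succ T f n)
    have lim : Tendsto (fun n => ∫ x, max (f x) (- runMax T f n (T x)) ∂μ) atTop
        (nhds (∫ x, f x ∂μ)) := by
      refine tendsto_integral_of_dominated_convergence (fun x => |f x|) ?_ hf.abs ?_ ?_
      · intro n
        exact (hfm.max ((runMax_measurable hT.measurable hfm n).comp
          hT.measurable).neg).aestronglyMeasurable
      · intro n
        refine ae_of_all _ fun x => ?_
        have := runMax_nonneg T f n (T x)
        rw [Real.norm_eq_abs, abs_le]
        exact ⟨le_max_of_le_left (neg_abs_le _), max_le (le_abs_self _)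
          (by have := abs_nonneg (f x); linarith)⟩
      · filter_upwards [h] with x hx
        have hx' : T x ∈ B := by
          have : x ∈ T ⁻¹' B := by rw [hBi]; exact hx
          exact this
        obtain ⟨l, hl⟩ := exists_nat_ge (- f x)
        obtain ⟨n, hn⟩ := hx' l
        refine tendsto_const_nhds.congr' ?_
        filter_upwards [eventually_ge_atTop n] with m hm
        have := runMax_mono T f (T x) hm
        simp only at this
        rw [max_eq_left]
        linarith
    have := ge_of_tendsto' lim key
    linarith
  · filter_upwards [h] with x hx
    simp only [hB, Set.mem_ofPred_eq, not_forall, not_exists, not_le] at hx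
    obtain ⟨k, hk⟩ := hx
    exact ⟨k, fun n => (sum_le_runMax T f n x).trans (hk n).le⟩

lemma ergodic_upper {Ω : Type*} [MeasurableSpace Ω] {μ : Measure Ω} [IsProbabilityMeasure μ]
    {T : Ω → Ω} (hT : Ergodic T μ) {f : Ω → ℝ} (hfm : Measurable f) (hf : Integrable f μ)
    {a : ℝ} (ha : ∫ x, f x ∂μ < a) :
    ∀ᵐ x ∂μ, ∃ D : ℝ, ∀ n : ℕ, ∑ i ∈ Finset.range n, f (T^[i] x) ≤ a * n + D := by
  have := ergodic_bdd hT (f := fun x => f x - a) (hfm.sub_const a) (hf.sub (integrable_const a))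
    (by rw [integral_sub hf (integrable_const a)]; simp; linarith)
  filter_upwards [this] with x ⟨D, hD⟩
  refine ⟨D, fun n => ?_⟩
  have := hD n
  rw [Finset.sum_sub_distrib] at this
  simp at this
  linarith

lemma ergodic_lower {Ω : Type*} [MeasurableSpace Ω] {μ : Measure Ω} [IsProbabilityMeasure μ]
    {T : Ω → Ω} (hT : Ergodic T μ) {f : Ω → ℝ} (hfm : Measurable f) (hf : Integrable f μ)
    {a : ℝ} (ha : a < ∫ x, f x ∂μ) :
    ∀ᵐ x ∂μ, ∃ D : ℝ, ∀ n : ℕ, a * n - D ≤ ∑ i ∈ Finset.range n, f (T^[i] x) := by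
  have := ergodic_upper hT (f := fun x => - f x) hfm.neg hf.neg (a := -a)
    (by rw [integral_neg]; linarith)
  filter_upwards [this] with x ⟨D, hD⟩
  refine ⟨D, fun n => ?_⟩
  have := hD n
  rw [Finset.sum_neg_distrib] at this
  linarith

/-- truncations of a nonnegative function of infinite integral have large integral -/
lemma trunc_large {Ω : Type*} [MeasurableSpace Ω] {μ : Measure Ω} [IsProbabilityMeasure μ]
    {f : Ω → ℝ} (hfm : Measurable f) (hpos : ∀ x, 0 < f x)
    (hinf : ∫⁻ x, ENNReal.ofReal (f x) ∂μ = ⊤) (L : ℝ) :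
    ∃ K : ℕ, Integrable (fun x => min (f x) K) μ ∧ L < ∫ x, min (f x) K ∂μ := by
  have hint : ∀ K : ℕ, Integrable (fun x => min (f x) K) μ := by
    intro K
    refine Integrable.of_bound (hfm.min measurable_const).aestronglyMeasurable K ?_
    refine ae_of_all _ fun x => ?_
    rw [Real.norm_eq_abs, abs_of_nonneg (le_min (hpos x).le (Nat.cast_nonneg K))]
    exact min_le_right _ _
  have lim : Tendsto (fun K : ℕ => ∫⁻ x, ENNReal.ofReal (min (f x) K) ∂μ) atTop
      (nhds (∫⁻ x, ENNReal.ofReal (f x) ∂μ)) := by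
    refine lintegral_tendsto_of_tendsto_of_monotone ?_ ?_ ?_
    · intro K
      exact (hfm.min measurable_const).ennreal_ofReal.aemeasurable
    · refine ae_of_all _ fun x => ?_
      intro a b hab
      have : (a:ℝ) ≤ b := by exact_mod_cast hab
      dsimp only
      gcongr
    · refine ae_of_all _ fun x => ?_
      obtain ⟨l, hl⟩ := exists_nat_ge (f x)
      refine tendsto_const_nhds.congr' ?_
      filter_upwards [eventually_ge_atTop l] with m hm
      have : (l:ℝ) ≤ m := by exact_mod_cast hm
      rw [min_eq_left (hl.trans this)]
  rw [hinf] at lim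
  have ev := (lim.eventually (lt_mem_nhds (ENNReal.ofReal_lt_top (r := L)))).exists
  obtain ⟨K, hK⟩ := ev
  refine ⟨K, hint K, ?_⟩
  rw [← ofReal_integral_eq_lintegral_ofReal (hint K)
    (ae_of_all _ fun x => (le_min (hpos x).le (Nat.cast_nonneg K)))] at hK
  exact ENNReal.ofReal_lt_ofReal_iff'.1 hK |>.1

lemma seq_upper {Ω : Type*} [MeasurableSpace Ω] {μ : Measure Ω} [IsProbabilityMeasure μ]
    {T : Ω → Ω} (hT : Ergodic T μ) {f : Ω → ℝ} (hfm : Measurable f) (hf : Integrable f μ) :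
    ∀ᵐ x ∂μ, ∃ C : ℝ, 0 < C ∧ ∀ n : ℕ, ∑ i ∈ Finset.range n, f (T^[i] x) ≤ C * (n + 1) := by
  filter_upwards [ergodic_upper hT hfm hf (lt_add_one _)] with x ⟨D, hD⟩
  set a := ∫ x, f x ∂μ + 1
  refine ⟨|a| + |D| + 1, by positivity, fun n => (hD n).trans ?_⟩
  have h1 : a * n ≤ |a| * n := by gcongr; exact le_abs_self a
  have h2 := le_abs_self D
  have h3 : 0 ≤ |D| * n := by positivity
  have h4 := abs_nonneg a
  have h5 : (0:ℝ) ≤ n := by positivity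
  nlinarith

lemma seq_lower {Ω : Type*} [MeasurableSpace Ω] {μ : Measure Ω} [IsProbabilityMeasure μ]
    {T : Ω → Ω} (hT : Ergodic T μ) {f : Ω → ℝ} (hfm : Measurable f) (hf : Integrable f μ)
    (hpos : ∀ x, 0 < f x) :
    ∀ᵐ x ∂μ, ∃ δ : ℝ, 0 < δ ∧ ∃ D : ℝ, ∀ n : ℕ,
      δ * n - D ≤ ∑ i ∈ Finset.range n, f (T^[i] x) := by
  have hp : 0 < ∫ x, f x ∂μ := by
    rw [integral_pos_iff_support_of_nonneg (fun x => (hpos x).le) hf]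
    have : Function.support f = Set.univ := by
      ext x; simp [(hpos x).ne']
    simp [this]
  filter_upwards [ergodic_lower hT hfm hf (half_lt_self hp)] with x ⟨D, hD⟩
  exact ⟨_, half_pos hp, D, hD⟩

lemma seq_inf {Ω : Type*} [MeasurableSpace Ω] {μ : Measure Ω} [IsProbabilityMeasure μ]
    {T : Ω → Ω} (hT : Ergodic T μ) {f : Ω → ℝ} (hfm : Measurable f) (hpos : ∀ x, 0 < f x)
    (hinf : ∫⁻ x, ENNReal.ofReal (f x) ∂μ = ⊤) :
    ∀ᵐ x ∂μ, ∀ L : ℝ, ∃ D : ℝ, ∀ n : ℕ,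
      L * n - D ≤ ∑ i ∈ Finset.range n, f (T^[i] x) := by
  have : ∀ l : ℕ, ∀ᵐ x ∂μ, ∃ D : ℝ, ∀ n : ℕ,
      (l:ℝ) * n - D ≤ ∑ i ∈ Finset.range n, f (T^[i] x) := by
    intro l
    obtain ⟨K, hK, hl⟩ := trunc_large (μ := μ) hfm hpos hinf l
    filter_upwards [ergodic_lower hT (hfm.min measurable_const) hK hl] with x ⟨D, hD⟩
    refine ⟨D, fun n => (hD n).trans ?_⟩
    exact Finset.sum_le_sum fun i _ => min_le_left _ _
  filter_upwards [ae_all_iff.2 this] with x hx L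
  obtain ⟨l, hl⟩ := exists_nat_ge L
  obtain ⟨D, hD⟩ := hx l
  refine ⟨D, fun n => le_trans ?_ (hD n)⟩
  gcongr

lemma seq_dbl {Ω : Type*} [MeasurableSpace Ω] {μ : Measure Ω} [IsProbabilityMeasure μ]
    {T : Ω → Ω} (hT : Ergodic T μ) {f : Ω → ℝ} (hfm : Measurable f) (hpos : ∀ x, 0 < f x)
    (hinf : ∫⁻ x, ENNReal.ofReal (f x) ∂μ = ⊤) :
    ∀ᵐ x ∂μ, ∀ L : ℝ, ∃ D : ℝ, ∀ m : ℕ,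
      L * m - D ≤ ∑ i ∈ Finset.range m, f (T^[m + i] x) := by
  have : ∀ l : ℕ, ∀ᵐ x ∂μ, ∃ D : ℝ, ∀ m : ℕ,
      (l:ℝ) * m - D ≤ ∑ i ∈ Finset.range m, f (T^[m + i] x) := by
    intro l
    obtain ⟨K, hK, hl⟩ := trunc_large (μ := μ) hfm hpos hinf (l + 3)
    filter_upwards [ergodic_lower hT (hfm.min measurable_const) hK (sub_one_lt _),
      ergodic_upper hT (hfm.min measurable_const) hK (lt_add_one _)] with x ⟨D, hD⟩ ⟨E, hE⟩
    set ρ := ∫ x, min (f x) K ∂μ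
    refine ⟨D + E, fun m => ?_⟩
    have h1 := hD (m + m)
    have h2 := hE m
    rw [Finset.sum_range_add] at h1
    have h3 : ∑ i ∈ Finset.range m, min (f (T^[m + i] x)) K
        ≤ ∑ i ∈ Finset.range m, f (T^[m + i] x) :=
      Finset.sum_le_sum fun i _ => min_le_left _ _
    push_cast at h1
    have h4 : (0:ℝ) ≤ m := by positivity
    nlinarith
  filter_upwards [ae_all_iff.2 this] with x hx L
  obtain ⟨l, hl⟩ := exists_nat_ge L
  obtain ⟨D, hD⟩ := hx l
  refine ⟨D, fun n => le_trans ?_ (hD n)⟩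
  gcongr

lemma ergodic_perm_symm {Ω : Type*} [MeasurableSpace Ω] {μ : Measure Ω}
    {T : Equiv.Perm Ω} (hT : Ergodic T μ) (hTsymm : MeasurePreserving T.symm μ μ) :
    Ergodic T.symm μ := by
  refine ⟨hTsymm, ⟨fun s hs h => hT.aeconst_set hs ?_⟩⟩
  conv_lhs => rw [← h]
  ext x
  simp

/-! ### Deterministic part -/

/-- The transition operator. -/
noncomputable def opP (κ : ℤ → ℝ) (f : ℤ → ℝ) (x : ℤ) : ℝ :=
  (κ (x - 1) * f (x - 1) + κ x * f (x + 1)) / cbar κ x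

/-- The weighted pairing. -/
noncomputable def pair (κ : ℤ → ℝ) (f g : ℤ → ℝ) : ℝ := ∑' x : ℤ, f x * g x * cbar κ x

lemma cbar_pos {κ : ℤ → ℝ} (hκ : ∀ x, 0 < κ x) (x : ℤ) : 0 < cbar κ x :=
  add_pos (hκ _) (hκ _)

lemma heatK_succ {κ : ℤ → ℝ} (_hκ : ∀ x, 0 < κ x) (n : ℕ) :
    heatK κ (n+1) = opP κ (heatK κ n) := by
  ext y
  have h1 : step κ (y - 1) y = κ (y - 1) / cbar κ (y - 1) := by
    simp [step]
  have h2 : step κ (y + 1) y = κ y / cbar κ (y + 1) := by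
    have : ¬ (y = y + 1 + 1) := by omega
    simp [step, this]
  rw [heatK, walk, h1, h2, opP, heatK, heatK]
  ring

lemma heatK_fin (κ : ℤ → ℝ) (n : ℕ) :
    ∀ x : ℤ, (n:ℤ) < |x| → heatK κ n x = 0 := by
  have : ∀ x : ℤ, (n:ℤ) < |x| → walk κ n 0 x = 0 := by
    induction n with
    | zero =>
      intro x hx
      have : x ≠ 0 := by
        rintro rfl; simp at hx
      simp [walk, this]
    | succ n ih =>
      intro x hx
      push_cast at hx
      have a1 : (n:ℤ) < |x - 1| := by
        rcases lt_abs.1 hx with h | h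
        · exact lt_abs.2 (Or.inl (by omega))
        · exact lt_abs.2 (Or.inr (by omega))
      have a2 : (n:ℤ) < |x + 1| := by
        rcases lt_abs.1 hx with h | h
        · exact lt_abs.2 (Or.inl (by omega))
        · exact lt_abs.2 (Or.inr (by omega))
      rw [walk, ih _ a1, ih _ a2]; simp
  intro x hx
  rw [heatK, this x hx, zero_div]

lemma heatK_support (κ : ℤ → ℝ) (n : ℕ) : (Function.support (heatK κ n)).Finite := by
  refine (Set.finite_Icc (-(n:ℤ)) n).subset ?_
  intro x hx
  by_contra h
  apply hx
  apply heatK_fin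
  rw [lt_abs]
  simp only [Set.mem_Icc, not_and_or, not_le] at h
  omega

lemma heatK_nonneg {κ : ℤ → ℝ} (hκ : ∀ x, 0 < κ x) (n : ℕ) : ∀ x, 0 ≤ heatK κ n x := by
  induction n with
  | zero =>
    intro x
    have := cbar_pos hκ x
    rw [heatK, walk]
    split_ifs <;> positivity
  | succ n ih =>
    intro x
    rw [heatK_succ hκ, opP]
    have := cbar_pos hκ x
    have := hκ x
    have := hκ (x-1)
    have := ih (x-1)
    have := ih (x+1)
    positivity

lemma summable_left {f : ℤ → ℝ} (hf : (Function.support f).Finite) (g : ℤ → ℝ) :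
    Summable (fun x => f x * g x) := by
  refine summable_of_hasFiniteSupport (hf.subset ?_)
  intro x hx h
  apply hx
  simp [h]

lemma summable_pair {f : ℤ → ℝ} (hf : (Function.support f).Finite) (κ g : ℤ → ℝ) :
    Summable (fun x => f x * g x * cbar κ x) := by
  simp_rw [mul_assoc]
  exact summable_left hf _

lemma support_shift {f : ℤ → ℝ} (hf : (Function.support f).Finite) (a : ℤ) :
    (Function.support (fun x => f (x + a))).Finite := by
  have : (Function.support (fun x => f (x + a))) = (fun x => x + a) ⁻¹' Function.support f := rfl
  rw [this]
  exact hf.preimage (add_left_injective a).injOn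

lemma tsum_shift (F : ℤ → ℝ) (a : ℤ) : ∑' x, F (x + a) = ∑' x, F x :=
  (Equiv.addRight a).tsum_eq F

lemma pair_opP_left {κ : ℤ → ℝ} (hκ : ∀ x, 0 < κ x) {f : ℤ → ℝ}
    (hf : (Function.support f).Finite) (g : ℤ → ℝ) :
    pair κ (opP κ f) g = ∑' x, f x * (κ x * g (x + 1)) + ∑' x, f (x + 1) * (κ x * g x) := by
  have s1 : Summable (fun x => f (x + -1) * (κ (x - 1) * g x)) :=
    summable_left (support_shift hf (-1)) _
  have s2 : Summable (fun x => f (x + 1) * (κ x * g x)) :=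
    summable_left (support_shift hf 1) _
  have e1 : ∑' x, f x * (κ x * g (x + 1)) = ∑' x, f (x + -1) * (κ (x - 1) * g x) := by
    rw [← tsum_shift _ (-1)]
    congr 1; ext x
    have : x + -1 + 1 = x := by ring
    rw [this, sub_eq_add_neg]
  rw [e1, ← s1.tsum_add s2, pair]
  congr 1; ext x
  have := (cbar_pos hκ x).ne'
  rw [opP, ← sub_eq_add_neg]
  field_simp

lemma pair_opP_right {κ : ℤ → ℝ} (hκ : ∀ x, 0 < κ x) {f : ℤ → ℝ}
    (hf : (Function.support f).Finite) (g : ℤ → ℝ) :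
    pair κ f (opP κ g) = ∑' x, f x * (κ x * g (x + 1)) + ∑' x, f (x + 1) * (κ x * g x) := by
  have s1 : Summable (fun x => f x * (κ x * g (x + 1))) := summable_left hf _
  have s2 : Summable (fun x => f x * (κ (x - 1) * g (x - 1))) := summable_left hf _
  have e1 : ∑' x, f (x + 1) * (κ x * g x) = ∑' x, f x * (κ (x - 1) * g (x - 1)) := by
    rw [← tsum_shift (fun x => f x * (κ (x - 1) * g (x - 1))) 1]
    congr 1; ext x
    have : x + 1 - 1 = x := by ring
    rw [this]
  rw [e1, ← s1.tsum_add s2, pair]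
  congr 1; ext x
  have := (cbar_pos hκ x).ne'
  rw [opP]
  field_simp
  ring

lemma pair_symm {κ : ℤ → ℝ} (hκ : ∀ x, 0 < κ x) {f : ℤ → ℝ}
    (hf : (Function.support f).Finite) (g : ℤ → ℝ) :
    pair κ (opP κ f) g = pair κ f (opP κ g) := by
  rw [pair_opP_left hκ hf, pair_opP_right hκ hf]

lemma pair_comm (κ f g : ℤ → ℝ) : pair κ f g = pair κ g f := by
  simp [pair, mul_comm]

lemma pair_add_left {f f' : ℤ → ℝ} (hf : (Function.support f).Finite)
    (hf' : (Function.support f').Finite) (κ g : ℤ → ℝ) :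
    pair κ (f + f') g = pair κ f g + pair κ f' g := by
  rw [pair, pair, pair, ← (summable_pair hf κ g).tsum_add (summable_pair hf' κ g)]
  congr 1; ext x
  simp; ring

lemma pair_zero {κ : ℤ → ℝ} (hκ : ∀ x, 0 < κ x) (g : ℤ → ℝ) : pair κ (heatK κ 0) g = g 0 := by
  rw [pair, tsum_eq_single 0]
  · have := (cbar_pos hκ 0).ne'
    simp [heatK, walk]
    field_simp
  · intro x hx
    simp [heatK, walk, hx]

lemma pair_heat {κ : ℤ → ℝ} (hκ : ∀ x, 0 < κ x) (m : ℕ) :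
    ∀ n, pair κ (heatK κ m) (heatK κ n) = heatK κ (m + n) 0 := by
  induction m with
  | zero => intro n; rw [pair_zero hκ]; simp
  | succ m ih =>
    intro n
    rw [heatK_succ hκ, pair_symm hκ (heatK_support κ m), ← heatK_succ hκ, ih]
    congr 1; omega

lemma pair_one {κ : ℤ → ℝ} (hκ : ∀ x, 0 < κ x) (m : ℕ) :
    pair κ (heatK κ m) (fun _ => 1) = 1 := by
  induction m with
  | zero => rw [pair_zero hκ]
  | succ m ih =>
    rw [heatK_succ hκ, pair_symm hκ (heatK_support κ m)]
    have : opP κ (fun _ => 1) = fun _ => 1 := by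
      ext x
      have := (cbar_pos hκ x).ne'
      simp only [opP, mul_one]
      exact div_self this
    rw [this, ih]

/-- energy identity -/
lemma energy_id {κ : ℤ → ℝ} (hκ : ∀ x, 0 < κ x) {g : ℤ → ℝ}
    (hg : (Function.support g).Finite) :
    ∑' x, κ x * (g (x + 1) - g x) ^ 2 = pair κ g g - pair κ (opP κ g) g := by
  rw [pair_opP_left hκ hg]
  have s1 : Summable (fun x => g x * (κ x * g (x + 1))) := summable_left hg _
  have s2 : Summable (fun x => g (x + 1) * (κ x * g x)) :=
    summable_left (support_shift hg 1) _
  have s3 : Summable (fun x => g x * (κ x * g x)) := summable_left hg _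
  have s4 : Summable (fun x => g x * (κ (x - 1) * g x)) := summable_left hg _
  have s5 : Summable (fun x => g (x + 1) * (κ x * g (x + 1))) :=
    summable_left (support_shift hg 1) _
  have e1 : pair κ g g = ∑' x, g x * (κ x * g x) + ∑' x, g (x + 1) * (κ x * g (x + 1)) := by
    have : ∑' x, g (x + 1) * (κ x * g (x + 1)) = ∑' x, g x * (κ (x - 1) * g x) := by
      rw [← tsum_shift (fun x => g x * (κ (x - 1) * g x)) 1]
      congr 1; ext x
      have : x + 1 - 1 = x := by ring
      rw [this]
    rw [this, ← s3.tsum_add s4, pair]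
    congr 1; ext x
    rw [cbar]; ring
  rw [e1, ← s3.tsum_add s5, ← s1.tsum_add s2, ← (s3.add s5).tsum_sub (s1.add s2)]
  congr 1; ext x
  ring

/-- `g_n = h_n + h_{n+1}` -/
noncomputable def gK (κ : ℤ → ℝ) (n : ℕ) : ℤ → ℝ := heatK κ n + heatK κ (n + 1)

lemma gK_support (κ : ℤ → ℝ) (n : ℕ) : (Function.support (gK κ n)).Finite :=
  ((heatK_support κ n).union (heatK_support κ (n+1))).subset (Function.support_add _ _)

lemma gK_nonneg {κ : ℤ → ℝ} (hκ : ∀ x, 0 < κ x) (n : ℕ) (x : ℤ) : 0 ≤ gK κ n x :=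
  add_nonneg (heatK_nonneg hκ _ _) (heatK_nonneg hκ _ _)

lemma opP_gK {κ : ℤ → ℝ} (hκ : ∀ x, 0 < κ x) (n : ℕ) : opP κ (gK κ n) = gK κ (n + 1) := by
  rw [gK, gK, heatK_succ hκ (n+1), heatK_succ hκ n]
  ext x
  simp only [opP, Pi.add_apply]
  ring

lemma pair_gK {κ : ℤ → ℝ} (hκ : ∀ x, 0 < κ x) (m n : ℕ) :
    pair κ (gK κ m) (gK κ n) = gK κ (m + n) 0 + gK κ (m + n + 1) 0 := by
  have h : ∀ k, pair κ (heatK κ k) (gK κ n) = gK κ (k + n) 0 := by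
    intro k
    rw [pair_comm, gK, pair_add_left (heatK_support κ _) (heatK_support κ _), pair_heat hκ,
      pair_heat hκ, gK, Pi.add_apply]
    congr 2 <;> omega
  rw [gK, pair_add_left (heatK_support κ _) (heatK_support κ _), h, h]
  congr 2; omega

lemma energy_gK {κ : ℤ → ℝ} (hκ : ∀ x, 0 < κ x) (n : ℕ) :
    ∑' x, κ x * (gK κ n (x + 1) - gK κ n x) ^ 2 = gK κ (2 * n) 0 - gK κ (2 * n + 2) 0 := by
  rw [energy_id hκ (gK_support κ n), opP_gK hκ, pair_gK hκ, pair_gK hκ]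
  have e1 : n + n = 2 * n := by omega
  have e2 : n + 1 + n = 2 * n + 1 := by omega
  rw [e1, e2]
  ring

lemma energy_summable (κ : ℤ → ℝ) (n : ℕ) :
    Summable (fun x => κ x * (gK κ n (x + 1) - gK κ n x) ^ 2) := by
  refine summable_of_hasFiniteSupport
    (((gK_support κ n).union (support_shift (gK_support κ n) 1)).subset ?_)
  intro x hx
  by_contra h
  simp only [Set.mem_union, Function.mem_support, not_or, not_not] at h
  apply hx
  simp [h.1, h.2]

lemma gK_anti {κ : ℤ → ℝ} (hκ : ∀ x, 0 < κ x) : Antitone (fun n => gK κ (2 * n) 0) := by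
  refine antitone_nat_of_succ_le fun n => ?_
  have h := energy_gK hκ n
  have h2 : 0 ≤ ∑' x, κ x * (gK κ n (x + 1) - gK κ n x) ^ 2 :=
    tsum_nonneg fun x => mul_nonneg (hκ x).le (sq_nonneg _)
  have e : 2 * (n + 1) = 2 * n + 2 := by ring
  rw [e]
  linarith

lemma osc_bound {κ : ℤ → ℝ} (hκ : ∀ x, 0 < κ x) (n N y : ℕ) (hy : y ≤ N) :
    (gK κ n 0 - gK κ n y) ^ 2 ≤
      (∑ i ∈ Finset.range N, 1 / κ i) * (gK κ (2 * n) 0 - gK κ (2 * n + 2) 0) := by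
  rw [← energy_gK hκ]
  set g := gK κ n
  have tel : g y - g 0 = ∑ i ∈ Finset.range y, (g ((i:ℤ) + 1) - g i) := by
    have := Finset.sum_range_sub (fun i : ℕ => g (i:ℤ)) y
    simp only [Nat.cast_add, Nat.cast_one, Nat.cast_zero] at this
    rw [this]
  have cs : (∑ i ∈ Finset.range y, (g ((i:ℤ) + 1) - g i)) ^ 2 ≤
      (∑ i ∈ Finset.range y, 1 / κ i) *
      (∑ i ∈ Finset.range y, κ i * (g ((i:ℤ) + 1) - g i) ^ 2) := by
    refine Finset.sum_sq_le_sum_mul_sum_of_sq_le_mul _ ?_ ?_ ?_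
    · intro i _; have := hκ i; positivity
    · intro i _; have := hκ i; positivity
    · intro i _; have := (hκ i).ne'; field_simp; exact le_rfl
  have h1 : ∑ i ∈ Finset.range y, κ i * (g ((i:ℤ) + 1) - g i) ^ 2 ≤
      ∑' x, κ x * (g (x + 1) - g x) ^ 2 := by
    have := (energy_summable κ n).sum_le_tsum ((Finset.range y).map Nat.castEmbedding)
      (fun x _ => mul_nonneg (hκ x).le (sq_nonneg _))
    rw [Finset.sum_map] at this
    exact this
  have h2 : ∑ i ∈ Finset.range y, 1 / κ i ≤ ∑ i ∈ Finset.range N, 1 / κ i := by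
    refine Finset.sum_le_sum_of_subset_of_nonneg (Finset.range_mono hy) ?_
    intro i _ _; have := hκ i; positivity
  have h3 : 0 ≤ ∑ i ∈ Finset.range y, 1 / κ i :=
    Finset.sum_nonneg fun i _ => by have := hκ i; positivity
  have h4 : 0 ≤ ∑ i ∈ Finset.range y, κ i * (g ((i:ℤ) + 1) - g i) ^ 2 :=
    Finset.sum_nonneg fun i _ => by have := hκ i; positivity
  calc (g 0 - g y) ^ 2 = (g y - g 0) ^ 2 := by ring
    _ ≤ (∑ i ∈ Finset.range y, 1 / κ i) *
      (∑ i ∈ Finset.range y, κ i * (g ((i:ℤ) + 1) - g i) ^ 2) := by rw [tel]; exact cs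
    _ ≤ _ := mul_le_mul h2 h1 h4 (h3.trans h2)

lemma upper_bound {κ : ℤ → ℝ} (hκ : ∀ x, 0 < κ x) (n N : ℕ) (hn : 0 < n) (hN : 0 < N) :
    gK κ (4 * n) 0 ≤ 4 / (∑ i ∈ Finset.range N, κ i)
      + (∑ i ∈ Finset.range N, 1 / κ i) / n := by
  have hn' : (0:ℝ) < n := by exact_mod_cast hn
  -- pigeonhole
  obtain ⟨m, hm1, hm2, hm⟩ : ∃ m, n ≤ m ∧ m < 2 * n ∧
      gK κ (4 * m) 0 - gK κ (4 * m + 2) 0 ≤ gK κ (4 * n) 0 / n := by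
    by_contra hcon
    push Not at hcon
    have hs : ∀ k ≤ n, k * (gK κ (4 * n) 0 / n) ≤ gK κ (4 * n) 0 - gK κ (4 * (n + k)) 0 := by
      intro k
      induction k with
      | zero => intro _; simp
      | succ k ih =>
        intro hk
        have h1 := ih (by omega)
        have h2 := hcon (n + k) (by omega) (by omega)
        have h3 : gK κ (4 * (n + k + 1)) 0 ≤ gK κ (4 * (n + k) + 2) 0 := by
          have := gK_anti hκ (show 2 * (n + k) + 1 ≤ 2 * (n + k + 1) by omega)
          dsimp only at this
          rw [show 2 * (2 * (n + k) + 1) = 4 * (n + k) + 2 by ring,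
            show 2 * (2 * (n + k + 1)) = 4 * (n + k + 1) by ring] at this
          exact this
        push_cast
        rw [← add_assoc]
        linarith
    have h1 := hs n le_rfl
    have h2 : 0 < gK κ (4 * (n + n)) 0 ∨ gK κ (4 * (n + n)) 0 = 0 := by
      rcases (gK_nonneg hκ (4 * (n + n)) 0).lt_or_eq with h | h
      · exact Or.inl h
      · exact Or.inr h.symm
    rw [mul_div_cancel₀ _ hn'.ne'] at h1
    rcases h2 with h2 | h2
    · linarith
    · have h3 := hcon (2 * n - 1) (by omega) (by omega)
      have h4 := hs (n - 1) (by omega)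
      have h5 : n + (n - 1) = 2 * n - 1 := by omega
      have h6 := gK_nonneg hκ (4 * (2 * n - 1) + 2) 0
      rw [h5, Nat.cast_sub (by omega : 1 ≤ n), sub_mul, mul_div_cancel₀ _ hn'.ne'] at h4
      push_cast at h4
      linarith
  set R := ∑ i ∈ Finset.range N, 1 / κ i with hR
  set V := ∑ i ∈ Finset.range N, κ i with hV
  have hRn : 0 ≤ R := Finset.sum_nonneg fun i _ => by have := hκ i; positivity
  have hVp : 0 < V := Finset.sum_pos (fun i _ => hκ i) ⟨0, by simpa using hN⟩
  set a := gK κ (4 * n) 0 with ha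
  have ha0 : 0 ≤ a := gK_nonneg hκ _ _
  set g := gK κ (2 * m) with hg
  have hga : a ≤ g 0 := by
    have := gK_anti hκ (show m ≤ 2 * n by omega)
    dsimp only at this
    rw [show 2 * (2 * n) = 4 * n by ring] at this
    exact this
  have osc : ∀ y ∈ Finset.range N, g 0 / 2 - R / n / 2 ≤ g (y:ℤ) := by
    intro y hy
    have h := osc_bound hκ (2 * m) N y (Finset.mem_range.1 hy).le
    have e : 2 * (2 * m) = 4 * m := by ring
    rw [e, ← hR, ← hg] at h
    have h' : (g 0 - g y) ^ 2 ≤ R * (a / n) := h.trans (by gcongr)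
    have h'' : R * (a / n) ≤ ((R / n + g 0) / 2) ^ 2 := by
      have e1 : R * (a / n) = R / n * a := by ring
      have e2 : R / n * a ≤ R / n * g 0 := by gcongr
      nlinarith [sq_nonneg (R / n - g 0)]
    have h3 : 0 ≤ (R / n + g 0) / 2 := by
      have := ha0.trans hga
      positivity
    have := abs_le_of_sq_le_sq' (h'.trans h'') h3
    linarith [this.2]
  have tot : pair κ g (fun _ => 1) = 2 := by
    rw [hg, gK, pair_add_left (heatK_support κ _) (heatK_support κ _), pair_one hκ, pair_one hκ]
    norm_num
  have part : ∑ i ∈ Finset.range N, g i * κ i ≤ 2 := by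
    have h1 := (summable_pair (gK_support κ (2 * m)) κ (fun _ => 1)).sum_le_tsum
      ((Finset.range N).map Nat.castEmbedding)
      (fun x _ => by
        have := gK_nonneg hκ (2 * m) x
        have := cbar_pos hκ x
        positivity)
    rw [Finset.sum_map] at h1
    have h2 : ∑' x, gK κ (2 * m) x * 1 * cbar κ x = 2 := tot
    rw [h2] at h1
    refine le_trans (Finset.sum_le_sum fun i _ => ?_) h1
    have h3 := gK_nonneg hκ (2 * m) i
    have h4 : κ i ≤ cbar κ i := by rw [cbar]; linarith [hκ ((i:ℤ) - 1)]
    simp only [Nat.castEmbedding_apply, mul_one]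
    gcongr
  have low : (g 0 / 2 - R / n / 2) * V ≤ 2 := by
    refine le_trans ?_ part
    rw [hV, Finset.mul_sum]
    refine Finset.sum_le_sum fun i hi => ?_
    have := osc i hi
    have := hκ i
    gcongr
  have : g 0 / 2 - R / n / 2 ≤ 2 / V := by rwa [le_div_iff₀ hVp]
  have e : 4 / V = 2 * (2 / V) := by ring
  rw [e]
  linarith

lemma walk_eq {κ : ℤ → ℝ} (hκ : ∀ x, 0 < κ x) (n : ℕ) :
    walk κ n 0 0 = cbar κ 0 * heatK κ n 0 := by
  have := (cbar_pos hκ 0).ne'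
  rw [heatK]; field_simp

lemma case1_aux {κ : ℤ → ℝ} (hκ : ∀ x, 0 < κ x)
    (hR : ∃ C : ℝ, 0 < C ∧ ∀ n : ℕ, ∑ i ∈ Finset.range n, 1 / κ i ≤ C * (n + 1))
    (hV : ∀ K : ℝ, ∃ D : ℝ, ∀ n : ℕ, K * n - D ≤ ∑ i ∈ Finset.range n, κ i)
    (η : ℝ) (hη : 0 < η) :
    ∀ᶠ n : ℕ in atTop, Real.sqrt n * gK κ (4 * n) 0 ≤ η := by
  obtain ⟨C, hC, hR⟩ := hR
  set ε : ℝ := η / (4 * C) with hε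
  have hεp : 0 < ε := by positivity
  set K : ℝ := 16 / (ε * η) with hK
  have hKp : 0 < K := by positivity
  obtain ⟨D, hD⟩ := hV K
  have hs : Tendsto (fun n : ℕ => Real.sqrt (n:ℝ)) atTop atTop :=
    Real.tendsto_sqrt_atTop.comp tendsto_natCast_atTop_atTop
  filter_upwards [hs.eventually_ge_atTop (2 * D / (K * ε)), hs.eventually_ge_atTop (2 / ε),
    hs.eventually_gt_atTop 0] with n h1 h2 h3
  set s := Real.sqrt (n:ℝ) with hsdef
  have hn : 0 < n := by
    have := Real.sqrt_pos.1 h3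
    exact_mod_cast this
  have hss : (n:ℝ) = s * s := (Real.mul_self_sqrt (Nat.cast_nonneg n)).symm
  set N := ⌈ε * s⌉₊ with hN
  have hN1 : ε * s ≤ N := Nat.le_ceil _
  have hN2 : (N:ℝ) < ε * s + 1 := Nat.ceil_lt_add_one (by positivity)
  have hN0 : 0 < N := Nat.ceil_pos.2 (by positivity)
  have ub := upper_bound hκ n N hn hN0
  have hVN := hD N
  have hRN := hR N
  set V := ∑ i ∈ Finset.range N, κ i
  set R := ∑ i ∈ Finset.range N, 1 / κ i
  have a1 : D ≤ K * ε * s / 2 := by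
    rw [div_le_iff₀ (by positivity)] at h1
    linarith
  have a2 : 2 ≤ ε * s := by
    rw [div_le_iff₀ hεp] at h2
    linarith
  have hV2 : K * ε * s / 2 ≤ V := by
    have : K * (ε * s) ≤ K * N := by gcongr
    linarith
  have hR2 : R ≤ 2 * C * ε * s := by
    have : C * (N + 1) ≤ C * (2 * (ε * s)) := by gcongr; linarith
    linarith
  have b1 : 4 / V ≤ 4 / (K * ε * s / 2) := by gcongr
  have b2 : R / n ≤ 2 * C * ε * s / n := by gcongr
  calc s * gK κ (4 * n) 0 ≤ s * (4 / (K * ε * s / 2) + 2 * C * ε * s / n) := by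
        gcongr; linarith
    _ = 8 / (K * ε) + 2 * C * ε := by
        rw [hss]; field_simp
        try ring
    _ = η := by
        rw [hK, hε]; field_simp
        try ring

lemma case1 {κ : ℤ → ℝ} (hκ : ∀ x, 0 < κ x)
    (hR : ∃ C : ℝ, 0 < C ∧ ∀ n : ℕ, ∑ i ∈ Finset.range n, 1 / κ i ≤ C * (n + 1))
    (hV : ∀ K : ℝ, ∃ D : ℝ, ∀ n : ℕ, K * n - D ≤ ∑ i ∈ Finset.range n, κ i) :
    Tendsto (fun n : ℕ => Real.sqrt (2 * n) * walk κ (2 * n) 0 0) atTop (nhds 0) := by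
  have hc := cbar_pos hκ 0
  have hdiv : Tendsto (fun n : ℕ => n / 2) atTop atTop :=
    Nat.tendsto_div_const_atTop (by norm_num)
  have main : ∀ η : ℝ, 0 < η → ∀ᶠ n : ℕ in atTop,
      Real.sqrt (2 * n) * walk κ (2 * n) 0 0 ≤ η := by
    intro η hη
    have := hdiv.eventually (case1_aux hκ hR hV (η / (3 * cbar κ 0)) (by positivity))
    filter_upwards [this, eventually_ge_atTop 2] with k hk hk2
    set n := k / 2 with hn
    have hn1 : 1 ≤ n := by omega
    have hkn : k ≤ 2 * n + 1 := by omega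
    have hb : heatK κ (2 * k) 0 ≤ gK κ (4 * n) 0 := by
      have h1 := gK_anti hκ (show 2 * n ≤ k by omega)
      dsimp only at h1
      rw [show 2 * (2 * n) = 4 * n by ring] at h1
      refine le_trans ?_ h1
      have := heatK_nonneg hκ (2 * k + 1) 0
      simp only [gK, Pi.add_apply]
      linarith
    have hsq : Real.sqrt (2 * k) ≤ 3 * Real.sqrt n := by
      rw [Real.sqrt_le_left (by positivity), mul_pow, Real.sq_sqrt (Nat.cast_nonneg n)]
      have h1 : (k:ℝ) ≤ 2 * n + 1 := by exact_mod_cast hkn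
      have h2 : (1:ℝ) ≤ n := by exact_mod_cast hn1
      linarith
    have h0 := heatK_nonneg hκ (2 * k) 0
    rw [walk_eq hκ]
    calc Real.sqrt (2 * k) * (cbar κ 0 * heatK κ (2 * k) 0)
        ≤ (3 * Real.sqrt n) * (cbar κ 0 * gK κ (4 * n) 0) := by gcongr
      _ = 3 * cbar κ 0 * (Real.sqrt n * gK κ (4 * n) 0) := by ring
      _ ≤ 3 * cbar κ 0 * (η / (3 * cbar κ 0)) := by gcongr
      _ = η := by field_simp
  rw [Metric.tendsto_nhds]
  intro η hη
  filter_upwards [main (η / 2) (by positivity)] with n hn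
  have h0 : 0 ≤ Real.sqrt (2 * n) * walk κ (2 * n) 0 0 := by
    rw [walk_eq hκ]
    have := heatK_nonneg hκ (2 * n) 0
    positivity
  rw [Real.dist_eq, sub_zero, abs_of_nonneg h0]
  linarith

/-- outgoing flux of the quadratic-type function -/
noncomputable def flx (k : ℕ → ℝ) : ℕ → ℝ
  | 0 => k 0
  | (i+1) => flx k i + k i + k (i+1)

/-- solution of `(P - 1) W = 1` on a half line -/
noncomputable def halfW (k : ℕ → ℝ) : ℕ → ℝ
  | 0 => 0
  | (i+1) => halfW k i + flx k i / k i

lemma flx_ge {k : ℕ → ℝ} (hk : ∀ i, 0 < k i) (i : ℕ) :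
    ∑ j ∈ Finset.range (i+1), k j ≤ flx k i := by
  induction i with
  | zero => simp [flx]
  | succ i ih =>
    rw [Finset.sum_range_succ, flx]
    linarith [hk i]

lemma flx_pos {k : ℕ → ℝ} (hk : ∀ i, 0 < k i) (i : ℕ) : 0 < flx k i := by
  refine lt_of_lt_of_le ?_ (flx_ge hk i)
  exact Finset.sum_pos (fun i _ => hk i) ⟨0, by simp⟩

lemma flx_mono {k : ℕ → ℝ} (hk : ∀ i, 0 < k i) : Monotone (flx k) := by
  refine monotone_nat_of_le_succ fun i => ?_
  rw [flx]
  linarith [hk i, hk (i+1)]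

lemma halfW_mono {k : ℕ → ℝ} (hk : ∀ i, 0 < k i) : Monotone (halfW k) := by
  refine monotone_nat_of_le_succ fun i => ?_
  rw [halfW]
  have := div_pos (flx_pos hk i) (hk i)
  linarith

lemma halfW_ge {k : ℕ → ℝ} (hk : ∀ i, 0 < k i) (m : ℕ) :
    (∑ i ∈ Finset.range m, k i) * (∑ i ∈ Finset.range m, 1 / k (m + i)) ≤ halfW k (m + m) := by
  have h : ∀ l, (∑ i ∈ Finset.range m, k i) * (∑ i ∈ Finset.range l, 1 / k (m + i))
      ≤ halfW k (m + l) := by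
    intro l
    induction l with
    | zero =>
      have := halfW_mono hk (Nat.zero_le m)
      simpa [halfW] using this
    | succ l ih =>
      rw [Finset.sum_range_succ, mul_add, ← add_assoc, halfW]
      have h1 : ∑ i ∈ Finset.range m, k i ≤ flx k (m + l) := by
        refine le_trans ?_ (flx_ge hk (m + l))
        refine Finset.sum_le_sum_of_subset_of_nonneg (Finset.range_mono (by omega)) ?_
        intro i _ _; exact (hk i).le
      have h2 := hk (m + l)
      have h3 : (∑ i ∈ Finset.range m, k i) * (1 / k (m + l)) ≤ flx k (m + l) / k (m + l) := by
        rw [mul_one_div]; gcongr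
      linarith
  exact h m

/-- right and left conductances -/
noncomputable def kR (κ : ℤ → ℝ) (i : ℕ) : ℝ := κ i

/-- right and left conductances -/
noncomputable def kL (κ : ℤ → ℝ) (i : ℕ) : ℝ := κ (-1 - i)

/-- solution of `(P - 1) w = 1` -/
noncomputable def fullW (κ : ℤ → ℝ) : ℤ → ℝ
  | Int.ofNat i => halfW (kR κ) i
  | Int.negSucc i => halfW (kL κ) (i + 1)

lemma fullW_nat (κ : ℤ → ℝ) (i : ℕ) : fullW κ i = halfW (kR κ) i := rfl

lemma fullW_neg (κ : ℤ → ℝ) (i : ℕ) : fullW κ (-i) = halfW (kL κ) i := by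
  cases i with
  | zero => rfl
  | succ i => rfl

lemma fullW_eq {κ : ℤ → ℝ} (hκ : ∀ x, 0 < κ x) (x : ℤ) :
    opP κ (fullW κ) x = fullW κ x + 1 := by
  have hc := cbar_pos hκ x
  rw [opP, div_eq_iff hc.ne', cbar]
  obtain ⟨i, rfl | rfl⟩ := x.eq_nat_or_neg
  · cases i with
    | zero =>
      have h1 : fullW κ (((0:ℕ):ℤ) - 1) = halfW (kL κ) 1 := fullW_neg κ 1
      have h2 : fullW κ (((0:ℕ):ℤ) + 1) = halfW (kR κ) 1 := fullW_nat κ 1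
      rw [h1, h2, fullW_nat]
      have a1 : halfW (kL κ) 1 = 1 := by
        simp only [halfW, flx, zero_add, kL]
        exact div_self (hκ _).ne'
      have a2 : halfW (kR κ) 1 = 1 := by
        simp only [halfW, flx, zero_add, kR]
        exact div_self (hκ _).ne'
      rw [a1, a2, halfW]
      ring
    | succ i =>
      have e1 : (((i+1:ℕ):ℤ) - 1) = (i:ℕ) := by push_cast; ring
      have e2 : (((i+1:ℕ):ℤ) + 1) = ((i+1+1:ℕ):ℤ) := by push_cast; ring
      rw [e1, e2, fullW_nat, fullW_nat, fullW_nat]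
      have b1 : κ (i:ℤ) = kR κ i := rfl
      have b2 : κ ((i+1:ℕ):ℤ) = kR κ (i+1) := rfl
      have p1 : 0 < kR κ i := hκ _
      have p2 : 0 < kR κ (i+1) := hκ _
      rw [b1, b2]
      simp only [halfW, flx]
      field_simp
      ring
  · cases i with
    | zero =>
      have h1 : fullW κ (-((0:ℕ):ℤ) - 1) = halfW (kL κ) 1 := fullW_neg κ 1
      have h2 : fullW κ (-((0:ℕ):ℤ) + 1) = halfW (kR κ) 1 := fullW_nat κ 1
      rw [h1, h2, fullW_neg]
      have a1 : halfW (kL κ) 1 = 1 := by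
        simp only [halfW, flx, zero_add, kL]
        exact div_self (hκ _).ne'
      have a2 : halfW (kR κ) 1 = 1 := by
        simp only [halfW, flx, zero_add, kR]
        exact div_self (hκ _).ne'
      rw [a1, a2, halfW]
      ring
    | succ i =>
      have e1 : (-((i+1:ℕ):ℤ) - 1) = -((i+1+1:ℕ):ℤ) := by push_cast; ring
      have e2 : (-((i+1:ℕ):ℤ) + 1) = -((i:ℕ):ℤ) := by push_cast; ring
      have b1 : κ (-((i+1:ℕ):ℤ)) = kL κ i := by
        rw [kL]; congr 1; push_cast; ring
      have b2 : κ (-((i+1:ℕ):ℤ) - 1) = kL κ (i+1) := by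
        rw [kL]; congr 1; push_cast; ring
      rw [b1, b2, e1, e2, fullW_neg, fullW_neg, fullW_neg]
      have p1 : 0 < kL κ i := hκ _
      have p2 : 0 < kL κ (i+1) := hκ _
      simp only [halfW, flx]
      field_simp
      ring

lemma pair_fullW {κ : ℤ → ℝ} (hκ : ∀ x, 0 < κ x) (n : ℕ) :
    pair κ (heatK κ n) (fullW κ) = n := by
  induction n with
  | zero => rw [pair_zero hκ]; simp [fullW, halfW]
  | succ n ih =>
    rw [heatK_succ hκ, pair_symm hκ (heatK_support κ n)]
    have h1 := pair_one hκ n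
    have : pair κ (heatK κ n) (opP κ (fullW κ)) =
        pair κ (heatK κ n) (fullW κ) + pair κ (heatK κ n) (fun _ => 1) := by
      rw [pair, pair, pair, ← (summable_pair (heatK_support κ n) κ _).tsum_add
        (summable_pair (heatK_support κ n) κ _)]
      congr 1; ext x
      rw [fullW_eq hκ]; ring
    rw [this, h1, ih]; push_cast; ring

/-- symmetric box -/
def box (M : ℕ) : Finset ℤ := (Finset.range M).image Int.ofNat ∪ (Finset.range M).image Int.negSucc

lemma fullW_out {κ : ℤ → ℝ} (hκ : ∀ x, 0 < κ x) (M : ℕ) (A : ℝ)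
    (h1 : A ≤ halfW (kR κ) M) (h2 : A ≤ halfW (kL κ) M) (x : ℤ) (hx : x ∉ box M) :
    A ≤ fullW κ x := by
  cases x with
  | ofNat i =>
    have : M ≤ i := by
      by_contra hlt
      apply hx
      simp only [box, Finset.mem_union, Finset.mem_image, Finset.mem_range]
      exact Or.inl ⟨i, by omega, rfl⟩
    exact h1.trans (halfW_mono (fun i => hκ _) this)
  | negSucc i =>
    have : M ≤ i := by
      by_contra hlt
      apply hx
      simp only [box, Finset.mem_union, Finset.mem_image, Finset.mem_range]
      exact Or.inr ⟨i, by omega, rfl⟩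
    exact h2.trans (halfW_mono (fun i => hκ _) (by omega : M ≤ i + 1))

lemma fullW_nonneg {κ : ℤ → ℝ} (hκ : ∀ x, 0 < κ x) (x : ℤ) : 0 ≤ fullW κ x := by
  cases x with
  | ofNat i => exact halfW_mono (k := kR κ) (fun i => hκ _) (Nat.zero_le i)
  | negSucc i => exact halfW_mono (k := kL κ) (fun i => hκ _) (Nat.zero_le (i+1))

lemma box_vol {κ : ℤ → ℝ} (hκ : ∀ x, 0 < κ x) (M : ℕ) :
    ∑ x ∈ box M, cbar κ x ≤
      2 * (∑ i ∈ Finset.range (M+1), kR κ i + ∑ i ∈ Finset.range (M+1), kL κ i) := by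
  have h0 : ∑ x ∈ box M, cbar κ x ≤ ∑ x ∈ (Finset.range M).image Int.ofNat, cbar κ x
      + ∑ x ∈ (Finset.range M).image Int.negSucc, cbar κ x := by
    rw [box, ← Finset.sum_union_inter]
    have : 0 ≤ ∑ x ∈ (Finset.range M).image Int.ofNat ∩ (Finset.range M).image Int.negSucc,
        cbar κ x := Finset.sum_nonneg fun x _ => (cbar_pos hκ x).le
    linarith
  rw [Finset.sum_image (fun a _ b _ h => Int.ofNat.inj h),
    Finset.sum_image (fun a _ b _ h => Int.negSucc.inj h)] at h0
  have e1 : ∑ i ∈ Finset.range M, cbar κ (Int.ofNat i) =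
      ∑ i ∈ Finset.range M, κ ((i:ℤ) - 1) + ∑ i ∈ Finset.range M, kR κ i := by
    rw [← Finset.sum_add_distrib]; rfl
  have e2 : ∑ i ∈ Finset.range (M+1), κ ((i:ℤ) - 1) = ∑ i ∈ Finset.range M, kR κ i + kL κ 0 := by
    rw [Finset.sum_range_succ']
    simp [kR, kL]
  have e3 : ∑ i ∈ Finset.range M, cbar κ (Int.negSucc i) =
      ∑ i ∈ Finset.range M, kL κ (i + 1) + ∑ i ∈ Finset.range M, kL κ i := by
    rw [← Finset.sum_add_distrib]
    refine Finset.sum_congr rfl fun i _ => ?_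
    rw [cbar, kL, kL, Int.negSucc_eq]
    congr 2 <;> (push_cast; ring)
  have e4 := Finset.sum_range_succ' (kL κ) M
  have e5 := Finset.sum_range_succ (kL κ) M
  have e6 := Finset.sum_range_succ (kR κ) M
  have e7 := Finset.sum_range_succ (fun i : ℕ => κ ((i:ℤ) - 1)) M
  have p1 : 0 < κ ((M:ℤ) - 1) := hκ _
  have p2 : 0 < kR κ M := hκ _
  have p3 : 0 < kL κ M := hκ _
  linarith

lemma lower_bound {κ : ℤ → ℝ} (hκ : ∀ x, 0 < κ x) (n M : ℕ) (hn : 0 < n)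
    (h1 : 2 * (n:ℝ) ≤ halfW (kR κ) M) (h2 : 2 * (n:ℝ) ≤ halfW (kL κ) M) :
    1 / 4 ≤ heatK κ (2 * n) 0 * ∑ x ∈ box M, cbar κ x := by
  have hn' : (0:ℝ) < n := by exact_mod_cast hn
  have hh := heatK_nonneg hκ n
  -- Markov
  have mk : 1 / 2 ≤ ∑ x ∈ box M, heatK κ n x * cbar κ x := by
    have s0 := summable_pair (heatK_support κ n) κ (fun _ => 1)
    have s1 := summable_pair (heatK_support κ n) κ (fullW κ)
    have t0 : ∑' x, heatK κ n x * 1 * cbar κ x = 1 := pair_one hκ n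
    have t1 : ∑' x, heatK κ n x * fullW κ x * cbar κ x = n := pair_fullW hκ n
    have t2 : ∑' x, (heatK κ n x * 1 * cbar κ x
        - 1 / (2 * n) * (heatK κ n x * fullW κ x * cbar κ x)) = 1 / 2 := by
      rw [s0.tsum_sub (s1.mul_left _), tsum_mul_left, t0, t1]
      field_simp; norm_num
    have t3 : ∑' x, (if x ∈ box M then heatK κ n x * cbar κ x else 0)
        = ∑ x ∈ box M, heatK κ n x * cbar κ x := by
      rw [tsum_eq_sum (s := box M)]
      · exact Finset.sum_congr rfl fun x hx => by simp [hx]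
      · intro x hx; simp [hx]
    rw [← t2, ← t3]
    refine Summable.tsum_le_tsum ?_ (s0.sub (s1.mul_left _)) ?_
    · intro x
      have c0 := cbar_pos hκ x
      have c1 := hh x
      have c2 := fullW_nonneg hκ x
      split_ifs with hx
      · have : 0 ≤ 1 / (2 * n) * (heatK κ n x * fullW κ x * cbar κ x) := by positivity
        linarith
      · have c3 := fullW_out hκ M _ h1 h2 x hx
        have : heatK κ n x * 1 * cbar κ x
            ≤ 1 / (2 * n) * (heatK κ n x * fullW κ x * cbar κ x) := by
          have : 1 / (2 * n) * (heatK κ n x * fullW κ x * cbar κ x)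
            = heatK κ n x * (fullW κ x / (2 * n)) * cbar κ x := by ring
          rw [this]
          gcongr
          rw [one_le_div (by positivity)]
          exact c3
        linarith
    · refine summable_of_hasFiniteSupport ((box M).finite_toSet.subset ?_)
      intro x hx
      by_contra hxm
      apply hx
      have : x ∉ box M := hxm
      simp [this]
  have cs : (∑ x ∈ box M, heatK κ n x * cbar κ x) ^ 2 ≤
      (∑ x ∈ box M, heatK κ n x * heatK κ n x * cbar κ x) * (∑ x ∈ box M, cbar κ x) := by
    refine Finset.sum_sq_le_sum_mul_sum_of_sq_le_mul _ ?_ ?_ ?_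
    · intro x _; have := cbar_pos hκ x; have := hh x; positivity
    · intro x _; exact (cbar_pos hκ x).le
    · intro x _; exact le_of_eq (by ring)
  have le : ∑ x ∈ box M, heatK κ n x * heatK κ n x * cbar κ x ≤ heatK κ (2 * n) 0 := by
    rw [two_mul, ← pair_heat hκ]
    refine (summable_pair (heatK_support κ n) κ _).sum_le_tsum _ ?_
    intro x _; have := cbar_pos hκ x; have := hh x; positivity
  have vp : 0 ≤ ∑ x ∈ box M, cbar κ x := Finset.sum_nonneg fun x _ => (cbar_pos hκ x).le
  calc (1:ℝ) / 4 = (1 / 2) ^ 2 := by norm_num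
    _ ≤ (∑ x ∈ box M, heatK κ n x * cbar κ x) ^ 2 := by gcongr
    _ ≤ _ := cs
    _ ≤ _ := by gcongr

/-- `W(2m)` beats any multiple of `m^2`. -/
lemma halfW_large {k : ℕ → ℝ} (hk : ∀ i, 0 < k i)
    (hlow : ∃ δ : ℝ, 0 < δ ∧ ∃ D : ℝ, ∀ n : ℕ, δ * n - D ≤ ∑ i ∈ Finset.range n, k i)
    (hr : ∀ L : ℝ, ∃ D : ℝ, ∀ m : ℕ, L * m - D ≤ ∑ i ∈ Finset.range m, 1 / k (m + i))
    (A : ℝ) (hA : 0 < A) :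
    ∀ᶠ m : ℕ in atTop, A * (m * m) ≤ halfW k (m + m) := by
  obtain ⟨δ, hδ, D, hD⟩ := hlow
  set L := 4 * A / δ with hL
  have hLp : 0 < L := by positivity
  obtain ⟨E, hE⟩ := hr L
  filter_upwards [tendsto_natCast_atTop_atTop.eventually_ge_atTop (2 * D / δ),
    tendsto_natCast_atTop_atTop.eventually_ge_atTop (2 * E / L)] with m h1 h2
  rw [div_le_iff₀ hδ] at h1
  rw [div_le_iff₀ hLp] at h2
  have a1 : δ * m / 2 ≤ ∑ i ∈ Finset.range m, k i := by linarith [hD m]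
  have a2 : L * m / 2 ≤ ∑ i ∈ Finset.range m, 1 / k (m + i) := by linarith [hE m]
  refine le_trans ?_ (halfW_ge hk m)
  calc A * (m * m) = (δ * m / 2) * (L * m / 2) := by
        rw [hL]; field_simp; try norm_num
    _ ≤ _ := by
        refine mul_le_mul a1 a2 (by positivity) (le_trans (by positivity) a1)

lemma case2 {κ : ℤ → ℝ} (hκ : ∀ x, 0 < κ x)
    (upR : ∃ C : ℝ, 0 < C ∧ ∀ n : ℕ, ∑ i ∈ Finset.range n, kR κ i ≤ C * (n + 1))
    (upL : ∃ C : ℝ, 0 < C ∧ ∀ n : ℕ, ∑ i ∈ Finset.range n, kL κ i ≤ C * (n + 1))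
    (lowR : ∃ δ : ℝ, 0 < δ ∧ ∃ D : ℝ, ∀ n : ℕ, δ * n - D ≤ ∑ i ∈ Finset.range n, kR κ i)
    (lowL : ∃ δ : ℝ, 0 < δ ∧ ∃ D : ℝ, ∀ n : ℕ, δ * n - D ≤ ∑ i ∈ Finset.range n, kL κ i)
    (rR : ∀ L : ℝ, ∃ D : ℝ, ∀ m : ℕ, L * m - D ≤ ∑ i ∈ Finset.range m, 1 / kR κ (m + i))
    (rL : ∀ L : ℝ, ∃ D : ℝ, ∀ m : ℕ, L * m - D ≤ ∑ i ∈ Finset.range m, 1 / kL κ (m + i)) :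
    Tendsto (fun n : ℕ => Real.sqrt (2 * n) * walk κ (2 * n) 0 0) atTop atTop := by
  have hc := cbar_pos hκ 0
  obtain ⟨C₁, hC₁, hR⟩ := upR
  obtain ⟨C₂, hC₂, hL⟩ := upL
  rw [tendsto_atTop]
  intro B
  -- choose ε small
  set B' : ℝ := |B| + 1 with hB'
  have hB'p : 0 < B' := by positivity
  set C : ℝ := C₁ + C₂ with hC
  have hCp : 0 < C := by positivity
  set ε : ℝ := cbar κ 0 / (32 * C * B') with hε
  have hεp : 0 < ε := by positivity
  have evR := halfW_large (k := kR κ) (fun i => hκ _) lowR rR (2 / ε ^ 2) (by positivity)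
  have evL := halfW_large (k := kL κ) (fun i => hκ _) lowL rL (2 / ε ^ 2) (by positivity)
  have hs : Tendsto (fun n : ℕ => Real.sqrt (n:ℝ)) atTop atTop :=
    Real.tendsto_sqrt_atTop.comp tendsto_natCast_atTop_atTop
  have hm : Tendsto (fun n : ℕ => ⌈ε * Real.sqrt (n:ℝ)⌉₊) atTop atTop :=
    tendsto_nat_ceil_atTop.comp (hs.const_mul_atTop hεp)
  filter_upwards [hm.eventually evR, hm.eventually evL, hs.eventually_ge_atTop (2 / ε),
    hs.eventually_gt_atTop 0] with n h1 h2 h3 h4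
  set s := Real.sqrt (n:ℝ) with hsdef
  have hn : 0 < n := by
    have := Real.sqrt_pos.1 h4
    exact_mod_cast this
  have hss : (n:ℝ) = s * s := (Real.mul_self_sqrt (Nat.cast_nonneg n)).symm
  set m := ⌈ε * s⌉₊ with hmdef
  have hm1 : ε * s ≤ m := Nat.le_ceil _
  have hm2 : (m:ℝ) < ε * s + 1 := Nat.ceil_lt_add_one (by positivity)
  have hA : 2 * (n:ℝ) ≤ 2 / ε ^ 2 * (m * m) := by
    calc 2 * (n:ℝ) = 2 / ε ^ 2 * ((ε * s) * (ε * s)) := by rw [hss]; field_simp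
      _ ≤ _ := by gcongr
  have lb := lower_bound hκ n (m + m) hn (hA.trans h1) (hA.trans h2)
  have vol := box_vol hκ (m + m)
  have r1 := hR (m + m + 1)
  have r2 := hL (m + m + 1)
  push_cast at r1 r2
  rw [div_le_iff₀ hεp] at h3
  have vol2 : ∑ x ∈ box (m + m), cbar κ x ≤ 8 * C * (ε * s) := by
    have v1 : C₁ * ((m:ℝ) + m + 1 + 1) ≤ C₁ * (4 * (ε * s)) := by gcongr; linarith
    have v2 : C₂ * ((m:ℝ) + m + 1 + 1) ≤ C₂ * (4 * (ε * s)) := by gcongr; linarith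
    rw [hC]
    linarith
  have h0 := heatK_nonneg hκ (2 * n) 0
  have lb2 : 1 / 4 ≤ heatK κ (2 * n) 0 * (8 * C * (ε * s)) := lb.trans (by gcongr)
  have hsq : s ≤ Real.sqrt (2 * n) := Real.sqrt_le_sqrt (by
    have : (0:ℝ) ≤ n := by positivity
    linarith)
  rw [walk_eq hκ]
  have fin : B' ≤ s * (cbar κ 0 * heatK κ (2 * n) 0) := by
    have e : heatK κ (2 * n) 0 * (8 * C * (ε * s)) =
        s * (cbar κ 0 * heatK κ (2 * n) 0) / (4 * B') := by
      rw [hε]; field_simp; ring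
    rw [e, le_div_iff₀ (by positivity)] at lb2
    linarith
  calc B ≤ B' := by rw [hB']; linarith [le_abs_self B]
    _ ≤ s * (cbar κ 0 * heatK κ (2 * n) 0) := fin
    _ ≤ _ := by gcongr

/-- Degenerate local limit theorem: if `1/c` is integrable but `∫c̄ dμ = ∞` then
`√(2n)·P_0^ω[S_{2n}=0] → 0` a.s.; if `c̄` is integrable but `∫(1/c)dμ = ∞` then
`√(2n)·P_0^ω[S_{2n}=0] → +∞` a.s. -/
theorem degenerate_local_limit_theorem {Ω : Type*} [MeasurableSpace Ω]
    (μ : Measure Ω) [IsProbabilityMeasure μ]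
    (T : Equiv.Perm Ω) (hT : Ergodic T μ)
    (hTsymm : MeasurePreserving T.symm μ μ)
    (c : Ω → ℝ) (hc : Measurable c) (hcpos : ∀ ω, 0 < c ω) :
    ((Integrable (fun ω => 1 / c ω) μ) →
      (∫⁻ ω, ENNReal.ofReal (c (T.symm ω) + c ω) ∂μ = ⊤) →
        ∀ᵐ ω ∂μ,
          Tendsto (fun n : ℕ => Real.sqrt (2 * n) * walk (envC T c ω) (2 * n) 0 0)
            atTop (nhds 0))
    ∧ ((Integrable (fun ω => c (T.symm ω) + c ω) μ) →
      (∫⁻ ω, ENNReal.ofReal (1 / c ω) ∂μ = ⊤) →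
        ∀ᵐ ω ∂μ,
          Tendsto (fun n : ℕ => Real.sqrt (2 * n) * walk (envC T c ω) (2 * n) 0 0)
            atTop atTop) := by
  have hsymm := ergodic_perm_symm hT hTsymm
  have hcinv : Measurable (fun ω => 1 / c ω) := measurable_const.div hc
  have hinvpos : ∀ ω, 0 < 1 / c ω := fun ω => one_div_pos.2 (hcpos ω)
  have hκ : ∀ ω x, 0 < envC T c ω x := fun ω x => hcpos _
  have eR : ∀ ω (i : ℕ), envC T c ω i = c (T^[i] ω) := by
    intro ω i
    simp only [envC, zpow_natCast, Equiv.Perm.iterate_eq_pow]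
  have eL : ∀ ω (i : ℕ), kL (envC T c ω) i = c (T.symm^[i] (T.symm ω)) := by
    intro ω i
    have h : (-1 - (i:ℤ)) = -((i+1:ℕ):ℤ) := by push_cast; ring
    rw [kL, envC, h, zpow_neg, zpow_natCast, ← inv_pow, ← Function.iterate_succ_apply,
      ← Equiv.Perm.inv_def, Equiv.Perm.iterate_eq_pow]
  refine ⟨fun hint hinf => ?_, fun hint hinf => ?_⟩
  · have hinf' : ∫⁻ ω, ENNReal.ofReal (c ω) ∂μ = ⊤ := by
      by_contra hne
      have e1 : ∫⁻ ω, ENNReal.ofReal (c (T.symm ω)) ∂μ = ∫⁻ ω, ENNReal.ofReal (c ω) ∂μ :=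
        hTsymm.lintegral_comp hc.ennreal_ofReal
      have e2 : ∫⁻ ω, ENNReal.ofReal (c (T.symm ω) + c ω) ∂μ
          = ∫⁻ ω, ENNReal.ofReal (c (T.symm ω)) ∂μ + ∫⁻ ω, ENNReal.ofReal (c ω) ∂μ := by
        rw [← lintegral_add_right _ hc.ennreal_ofReal]
        congr 1; ext ω
        exact ENNReal.ofReal_add (hcpos _).le (hcpos _).le
      rw [e2, e1] at hinf
      exact (ENNReal.add_ne_top.2 ⟨hne, hne⟩) hinf
    filter_upwards [seq_upper hT hcinv hint, seq_inf hT hc hcpos hinf'] with ω h1 h2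
    refine case1 (hκ ω) ?_ ?_
    · simpa only [eR] using h1
    · simpa only [eR] using h2
  · have hci : Integrable c μ := by
      refine hint.mono' hc.aestronglyMeasurable (ae_of_all _ fun ω => ?_)
      rw [Real.norm_eq_abs, abs_of_pos (hcpos ω)]
      linarith [hcpos (T.symm ω)]
    have q := hTsymm.quasiMeasurePreserving
    filter_upwards [seq_upper hT hc hci, q.ae (seq_upper hsymm hc hci),
      seq_lower hT hc hci hcpos, q.ae (seq_lower hsymm hc hci hcpos),
      seq_dbl hT hcinv hinvpos hinf, q.ae (seq_dbl hsymm hcinv hinvpos hinf)]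
      with ω h1 h2 h3 h4 h5 h6
    refine case2 (hκ ω) ?_ ?_ ?_ ?_ ?_ ?_
    · simpa only [kR, eR] using h1
    · simpa only [eL] using h2
    · simpa only [kR, eR] using h3
    · simpa only [eL] using h4
    · simpa only [kR, eR] using h5
    · simpa only [eL] using h6
end

section
/- Uniform off-diagonal bound: in the stationary conductance model on ℤ with 1/c integrable, for μ-a.e. ω the sequence √(2n)·max_{x∈B(0,√(2n))∩2ℤ} (P_0^ω[S_{2n}=x]/c̄(x)) is bounded in n; and if additionally ∫c̄ dμ = +∞, this sequence converges to 0. -/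
open MeasureTheory Filter
open scoped BigOperators ENNReal

namespace HK

lemma cbar_pos {κ : ℤ → ℝ} (hκ : ∀ x, 0 < κ x) (x : ℤ) : 0 < cbar κ x :=
  add_pos (hκ _) (hκ _)

lemma heat_succ {κ : ℤ → ℝ} (hκ : ∀ x, 0 < κ x) (n : ℕ) (x : ℤ) :
    heatK κ (n+1) x * cbar κ x = κ (x-1) * heatK κ n (x-1) + κ x * heatK κ n (x+1) := by
  have h0 := (cbar_pos hκ x).ne'
  have h1 : step κ (x-1) x = κ (x-1) / cbar κ (x-1) := by simp [step]
  have h2 : step κ (x+1) x = κ x / cbar κ (x+1) := by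
    have : ¬ (x = x + 1 + 1) := by omega
    simp [step, this]
  rw [heatK, div_mul_cancel₀ _ h0, walk, h1, h2, heatK, heatK]
  ring

lemma heat_nonneg {κ : ℤ → ℝ} (hκ : ∀ x, 0 < κ x) (n : ℕ) (x : ℤ) : 0 ≤ heatK κ n x := by
  induction n generalizing x with
  | zero =>
    have := cbar_pos hκ x
    unfold heatK walk
    split_ifs <;> positivity
  | succ n ih =>
    have h := heat_succ hκ n x
    have h1 := mul_nonneg (hκ (x-1)).le (ih (x-1))
    have h2 := mul_nonneg (hκ x).le (ih (x+1))
    by_contra hneg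
    have := mul_neg_of_neg_of_pos (not_le.mp hneg) (cbar_pos hκ x)
    linarith

lemma heat_zero_of_lt {κ : ℤ → ℝ} (hκ : ∀ x, 0 < κ x) (n : ℕ) (x : ℤ) (hx : (n:ℤ) < |x|) :
    heatK κ n x = 0 := by
  induction n generalizing x with
  | zero =>
    have : x ≠ 0 := by rintro rfl; simp at hx
    simp [heatK, walk, this]
  | succ n ih =>
    have h := heat_succ hκ n x
    push_cast at hx
    rw [ih (x-1) (by grind), ih (x+1) (by grind)] at h
    have := (cbar_pos hκ x).ne'
    simpa [this] using h

lemma sm (N : ℕ) {f : ℤ → ℝ} (h : ∀ x, (N:ℤ) < |x| → f x = 0) : Summable f := by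
  apply summable_of_ne_finset_zero (s := Finset.Icc (-(N:ℤ)) N)
  intro x hx
  apply h
  simp at hx
  grind

lemma tsum_shift1 (f : ℤ → ℝ) : ∑' x, f (x+1) = ∑' x, f x := (Equiv.addRight (1:ℤ)).tsum_eq f

lemma shift_sum (N : ℕ) {κ f g : ℤ → ℝ} (h : ∀ x, (N:ℤ) < |x| → f x = 0) :
    ∑' x, (κ (x-1) * f (x-1) * g x + κ x * f (x+1) * g x) =
      ∑' x, (κ x * f x * g (x+1) + κ (x-1) * f x * g (x-1)) := by
  rw [Summable.tsum_add, Summable.tsum_add]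
  · rw [← tsum_shift1 (fun x => κ (x-1) * f (x-1) * g x), ← tsum_shift1 (fun x => κ (x-1) * f x * g (x-1))]
    simp
  all_goals
    apply sm (N+1)
    intro x hx
    push_cast at hx
    rw [h _ (by grind)]; ring

noncomputable def ip (κ : ℤ → ℝ) (n m : ℕ) : ℝ := ∑' x, heatK κ n x * heatK κ m x * cbar κ x

lemma ip_swap {κ : ℤ → ℝ} (hκ : ∀ x, 0 < κ x) (n m : ℕ) : ip κ (n+1) m = ip κ n (m+1) := by
  have h := shift_sum n (κ := κ) (f := heatK κ n) (g := heatK κ m)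
    (heat_zero_of_lt hκ n)
  unfold ip
  have e1 : ∀ x, heatK κ (n+1) x * heatK κ m x * cbar κ x =
    (κ (x-1) * heatK κ n (x-1) * heatK κ m x + κ x * heatK κ n (x+1) * heatK κ m x) := by
    intro x
    linear_combination (heatK κ m x) * heat_succ hκ n x
  have e2 : ∀ x, heatK κ n x * heatK κ (m+1) x * cbar κ x =
    (κ x * heatK κ n x * heatK κ m (x+1) + κ (x-1) * heatK κ n x * heatK κ m (x-1)) := by
    intro x
    linear_combination (heatK κ n x) * heat_succ hκ m x
  simp_rw [e1, e2]
  exact h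

lemma ip_eq {κ : ℤ → ℝ} (hκ : ∀ x, 0 < κ x) (n m : ℕ) : ip κ n m = heatK κ (n+m) 0 := by
  induction n generalizing m with
  | zero =>
    unfold ip
    rw [tsum_eq_single 0]
    · have := (cbar_pos hκ 0).ne'
      simp [heatK, walk]
      field_simp
    · intro x hx
      simp [heatK, walk, hx]
  | succ n ih => 
    rw [ip_swap hκ, ih]
    congr 1
    ring

noncomputable def aa (κ : ℤ → ℝ) (x : ℤ) : ℝ := κ (x-1) * κ x / cbar κ x

lemma aa_pos {κ : ℤ → ℝ} (hκ : ∀ x, 0 < κ x) (x : ℤ) : 0 < aa κ x :=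
  div_pos (mul_pos (hκ _) (hκ _)) (cbar_pos hκ x)

lemma sum_P (N : ℕ) {κ f : ℤ → ℝ} (h : ∀ x, (N:ℤ) < |x| → f x = 0) :
    ∑' x, (κ (x-1) * f (x-1) + κ x * f (x+1)) = ∑' x, f x * cbar κ x := by
  have e : ∀ x, f x * cbar κ x = κ x * f x + κ (x-1) * f x := by
    intro x; unfold cbar; ring
  simp_rw [e]
  rw [Summable.tsum_add, Summable.tsum_add]
  · rw [← tsum_shift1 (fun x => κ (x-1) * f (x-1)), ← tsum_shift1 (fun x => κ (x-1) * f x)]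
    simp
  all_goals
    apply sm (N+1)
    intro x hx
    push_cast at hx
    rw [h _ (by grind)]; ring

lemma mass {κ : ℤ → ℝ} (hκ : ∀ x, 0 < κ x) (n : ℕ) : ∑' x, heatK κ n x * cbar κ x = 1 := by
  induction n with
  | zero =>
    rw [tsum_eq_single 0]
    · have := (cbar_pos hκ 0).ne'
      simp [heatK, walk]
      field_simp
    · intro x hx
      simp [heatK, walk, hx]
  | succ n ih =>
    simp_rw [heat_succ hκ n]
    rw [sum_P n (heat_zero_of_lt hκ n), ih]

lemma dirichlet {κ : ℤ → ℝ} (hκ : ∀ x, 0 < κ x) (n : ℕ) :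
    ∑' x, aa κ x * (heatK κ n (x+1) - heatK κ n (x-1))^2 = 
      heatK κ (2*n) 0 - heatK κ (2*n+2) 0 := by
  have h1 := ip_eq hκ n n
  have h2 := ip_eq hκ (n+1) (n+1)
  rw [show n + n = 2*n by ring] at h1
  rw [show n + 1 + (n + 1) = 2*n + 2 by ring] at h2
  rw [← h1, ← h2, eq_sub_iff_add_eq]
  unfold ip
  rw [← Summable.tsum_add]
  · rw [← sum_P n (f := fun x => heatK κ n x * heatK κ n x) (fun x hx => by rw [heat_zero_of_lt hκ n x hx]; ring)]
    congr 1; ext x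
    have h0 := (cbar_pos hκ x).ne'
    have h := heat_succ hκ n x
    rw [← eq_div_iff h0] at h
    rw [h, aa]
    field_simp
    unfold cbar
    ring
  · apply sm (n+1)
    intro x hx
    push_cast at hx
    rw [heat_zero_of_lt hκ n (x+1) (by grind), heat_zero_of_lt hκ n (x-1) (by grind)]; ring
  · apply sm (n+1)
    intro x hx
    rw [heat_zero_of_lt hκ (n+1) x hx]; ring

/-- `D n = ‖h_n‖² - ‖h_{n+1}‖²`. -/
noncomputable def DD (κ : ℤ → ℝ) (n : ℕ) : ℝ := heatK κ (2*n) 0 - heatK κ (2*n+2) 0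

lemma DD_nonneg {κ : ℤ → ℝ} (hκ : ∀ x, 0 < κ x) (n : ℕ) : 0 ≤ DD κ n := by
  rw [DD, ← dirichlet hκ]
  exact tsum_nonneg fun x => mul_nonneg (aa_pos hκ x).le (sq_nonneg _)

lemma DD_anti {κ : ℤ → ℝ} (hκ : ∀ x, 0 < κ x) : Antitone (DD κ) := by
  apply antitone_nat_of_succ_le
  intro n
  have h1 := ip_eq hκ n n
  have h2 := ip_eq hκ n (n+2)
  have h3 := ip_eq hκ (n+2) (n+2)
  have hn : 0 ≤ ∑' x, (heatK κ n x - heatK κ (n+2) x)^2 * cbar κ x :=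
    tsum_nonneg fun x => mul_nonneg (sq_nonneg _) (cbar_pos hκ x).le
  have he : ∑' x, (heatK κ n x - heatK κ (n+2) x)^2 * cbar κ x = 
      ip κ n n - 2 * ip κ n (n+2) + ip κ (n+2) (n+2) := by
    unfold ip
    rw [← tsum_mul_left, ← Summable.tsum_sub, ← Summable.tsum_add]
    · congr 1; ext x; ring
    · apply sm n; intro x hx; rw [heat_zero_of_lt hκ n x hx]; ring
    · apply sm (n+2); intro x hx; rw [heat_zero_of_lt hκ (n+2) x hx]; ring
    · apply sm n; intro x hx; rw [heat_zero_of_lt hκ n x hx]; ring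
    · apply sm n; intro x hx; rw [heat_zero_of_lt hκ n x hx]; ring
  rw [he, h1, h2, h3] at hn
  unfold DD
  rw [show n + n = 2*n by ring, show n + (n+2) = 2*n+2 by ring, show n + 2 + (n+2) = 2*n+4 by ring] at hn
  rw [show 2*(n+1) = 2*n+2 by ring]
  linarith

lemma DD_le {κ : ℤ → ℝ} (hκ : ∀ x, 0 < κ x) (n : ℕ) : n * DD κ (2*n) ≤ heatK κ (2*n) 0 := by
  have key : ∀ k ≤ n, k * DD κ (2*n) ≤ heatK κ (2*n) 0 - heatK κ (2*n+2*k) 0 := by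
    intro k
    induction k with
    | zero => simp
    | succ k ih =>
      intro hk
      have h1 := ih (by omega)
      have h2 : DD κ (2*n) ≤ DD κ (n+k) := DD_anti hκ (by omega)
      unfold DD at h2 ⊢
      unfold DD at h1
      rw [show 2*(n+k) = 2*n+2*k by ring] at h2
      rw [show 2*n+2*(k+1) = 2*n+2*k+2 by ring]
      push_cast
      linarith
  have := key n le_rfl
  have := heat_nonneg hκ (2*n+2*n) 0
  linarith

lemma osc {κ : ℤ → ℝ} (hκ : ∀ x, 0 < κ x) (n : ℕ) (p : ℤ) (k : ℕ) :
    (heatK κ n (p + 2*k) - heatK κ n p)^2 ≤ (∑ i ∈ Finset.range (2*k), 1 / κ (p+i)) * DD κ n := by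
  set f := heatK κ n with hf
  set t : ℕ → ℤ := fun i => p + 2*i + 1 with ht
  have h1 : f (p+2*k) - f p = ∑ i ∈ Finset.range k, (f (t i + 1) - f (t i - 1)) := by
    have := Finset.sum_range_sub (fun i : ℕ => f (p+2*i)) k
    simp only [Nat.cast_zero, mul_zero, add_zero] at this
    rw [← this]
    apply Finset.sum_congr rfl
    intro i _
    simp only [ht]
    push_cast
    congr 2 <;> ring_nf
  have h2 : ∑ i ∈ Finset.range (2*k), 1 / κ (p+i) = ∑ i ∈ Finset.range k, 1 / aa κ (t i) := by
    clear h1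
    induction k with
    | zero => simp
    | succ k ih =>
      rw [show 2*(k+1) = 2*k+1+1 by ring, Finset.sum_range_succ, Finset.sum_range_succ, ih, 
        Finset.sum_range_succ]
      have e1 : t k - 1 = p + ((2*k : ℕ) : ℤ) := by simp [ht]
      have e2 : t k = p + ((2*k+1 : ℕ) : ℤ) := by simp [ht]; ring
      rw [← e1, ← e2, aa, cbar, add_assoc]
      congr 1
      have := (hκ (t k)).ne'
      have := (hκ (t k - 1)).ne'
      field_simp
      ring
  have h3 : ∑ i ∈ Finset.range k, aa κ (t i) * (f (t i+1) - f (t i-1))^2 ≤ DD κ n := by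
    rw [DD, ← dirichlet hκ]
    have hinj : Function.Injective t := by intro a b hab; simp only [ht] at hab; omega
    rw [← Finset.sum_image (f := fun x => aa κ x * (f (x+1) - f (x-1))^2) (g := t) (hinj.injOn)]
    apply Summable.sum_le_tsum
    · intro x _
      exact mul_nonneg (aa_pos hκ x).le (sq_nonneg _)
    · apply sm (n+1)
      intro x hx
      push_cast at hx
      rw [hf, heat_zero_of_lt hκ n (x+1) (by grind), heat_zero_of_lt hκ n (x-1) (by grind)]; ring
  rw [h1, h2]
  refine (Finset.sum_sq_le_sum_mul_sum_of_sq_le_mul (Finset.range k) 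
    (f := fun i => 1 / aa κ (t i)) (g := fun i => aa κ (t i) * (f (t i+1) - f (t i-1))^2) ?_ ?_ ?_).trans ?_
  · intro i _; exact (one_div_pos.mpr (aa_pos hκ _)).le
  · intro i _; exact mul_nonneg (aa_pos hκ _).le (sq_nonneg _)
  · intro i _
    have := (aa_pos hκ (t i)).ne'
    apply le_of_eq
    field_simp
  · exact mul_le_mul_of_nonneg_left h3 (Finset.sum_nonneg fun i _ => (one_div_pos.mpr (aa_pos hκ _)).le)

/-- Bound at the origin. -/
lemma origin_bound {κ : ℤ → ℝ} (hκ : ∀ x, 0 < κ x) {C : ℝ} 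
    (hC : ∀ k : ℕ, ∑ i ∈ Finset.range k, 1 / κ i ≤ C * k) (n K : ℕ) (hK : 1 ≤ K) :
    heatK κ (2*n) 0 ≤ 1 / (∑ i ∈ Finset.range K, κ i) + Real.sqrt (C * (2 * K) * DD κ (2*n)) := by
  set S := Real.sqrt (C * (2 * K) * DD κ (2*n)) with hS
  set W := ∑ i ∈ Finset.range K, κ i with hW
  set V := ∑ j ∈ Finset.range K, cbar κ (2*j) with hV
  have hD := DD_nonneg hκ (2*n)
  have hWpos : 0 < W := Finset.sum_pos (fun i _ => hκ _) (by simpa using (by omega : K ≠ 0))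
  have hWV : W ≤ V := by
    have h1 : ∀ K : ℕ, ∑ i ∈ Finset.range (2*K), κ ((i:ℤ)-1) = ∑ j ∈ Finset.range K, cbar κ (2*j) := by
      intro K
      induction K with
      | zero => simp
      | succ k ih =>
        rw [show 2*(k+1) = 2*k+1+1 by ring, Finset.sum_range_succ, Finset.sum_range_succ, ih, 
          Finset.sum_range_succ, cbar, add_assoc]
        congr 2
        push_cast; ring_nf
    rw [hV, ← h1, hW]
    have h2 : ∑ i ∈ Finset.range K, κ i = ∑ i ∈ Finset.Ico 1 (K+1), κ ((i:ℤ)-1) := by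
      rw [Finset.sum_Ico_eq_sum_range]
      simp
    rw [h2]
    apply Finset.sum_le_sum_of_subset_of_nonneg
    · intro i hi; simp at hi ⊢; omega
    · intro i _ _; exact (hκ _).le
  have hpt : ∀ j ∈ Finset.range K, heatK κ (2*n) 0 - S ≤ heatK κ (2*n) (2*j) := by
    intro j hj
    have hj' := Finset.mem_range.mp hj
    have h := osc hκ (2*n) 0 j
    simp only [zero_add] at h
    have h' : (heatK κ (2*n) (2*j) - heatK κ (2*n) 0)^2 ≤ C * (2 * K) * DD κ (2*n) := by
      refine h.trans (mul_le_mul_of_nonneg_right ?_ hD)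
      have a1 : ∑ i ∈ Finset.range (2*j), 1 / κ i ≤ ∑ i ∈ Finset.range (2*K), 1 / κ i :=
        Finset.sum_le_sum_of_subset_of_nonneg (by intro i hi; simp at hi ⊢; omega)
          (fun i _ _ => (one_div_pos.mpr (hκ _)).le)
      have a2 := hC (2*K)
      push_cast at a2
      linarith
    have := Real.abs_le_sqrt h'
    rw [abs_le] at this
    linarith [this.1]
  have hm : ∑ j ∈ Finset.range K, heatK κ (2*n) (2*j) * cbar κ (2*j) ≤ 1 := by
    rw [← mass hκ (2*n)]
    have hinj : Function.Injective (fun j : ℕ => 2 * (j:ℤ)) := by intro a b hab; simp at hab; omega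
    rw [← Finset.sum_image (f := fun x => heatK κ (2*n) x * cbar κ x) (g := fun j : ℕ => 2 * (j:ℤ)) (hinj.injOn)]
    apply Summable.sum_le_tsum
    · intro x _
      exact mul_nonneg (heat_nonneg hκ _ x) (cbar_pos hκ x).le
    · apply sm (2*n)
      intro x hx
      rw [heat_zero_of_lt hκ _ x hx]; ring
  have hVm : (heatK κ (2*n) 0 - S) * V ≤ 1 := by
    refine le_trans ?_ hm
    rw [hV, Finset.mul_sum]
    exact Finset.sum_le_sum fun j hj => mul_le_mul_of_nonneg_right (hpt j hj) (cbar_pos hκ _).le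
  have hle : heatK κ (2*n) 0 - S ≤ 1 / W := by
    by_cases hneg : heatK κ (2*n) 0 - S ≤ 0
    · exact hneg.trans (one_div_pos.mpr hWpos).le
    · rw [le_div_iff₀ hWpos]
      exact (mul_le_mul_of_nonneg_left hWV (not_le.mp hneg).le).trans hVm
  linarith

lemma e_bound {κ : ℤ → ℝ} (hκ : ∀ x, 0 < κ x) {C : ℝ} (hC0 : 0 ≤ C)
    (hC : ∀ k : ℕ, ∑ i ∈ Finset.range k, 1 / κ i ≤ C * k) (n K : ℕ) (hn : 1 ≤ n) (hK : 1 ≤ K) :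
    Real.sqrt (2*n) * heatK κ (2*n) 0 ≤
      2 * (Real.sqrt (2*n) / (∑ i ∈ Finset.range K, κ i)) + 4 * C * (K / Real.sqrt (2*n)) := by
  have h := origin_bound hκ hC n K hK
  have hDD := DD_le hκ n
  have hn' : (1:ℝ) ≤ n := by exact_mod_cast hn
  have hE := heat_nonneg hκ (2*n) 0
  set s := Real.sqrt (2*n) with hs
  have hs2 : s^2 = 2*n := Real.sq_sqrt (by positivity)
  have hspos : 0 < s := Real.sqrt_pos.mpr (by positivity)
  set E := heatK κ (2*n) 0
  set W := ∑ i ∈ Finset.range K, κ i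
  set D := DD κ (2*n)
  have hsq : Real.sqrt (C * (2*K) * D) ≤ E / 2 + 2 * C * K / s^2 := by
    apply Real.sqrt_le_iff.mpr
    refine ⟨by positivity, ?_⟩
    have hD : D ≤ E / n := by
      rw [le_div_iff₀ (by positivity)]; linarith
    have h1 : C * (2*K) * D ≤ C * (2*K) * (E/n) := mul_le_mul_of_nonneg_left hD (by positivity)
    refine h1.trans ?_
    have h2 : C * (2*K) * (E/n) = 4 * (E/2) * (2 * C * K / s^2) := by
      rw [hs2]; field_simp; ring
    rw [h2]
    nlinarith [sq_nonneg (E/2 - 2 * C * K / s^2)]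
  have h3 : E ≤ 2 * (1/W) + 4 * C * K / s^2 := by
    have : 2 * (2 * C * K / s^2) = 4 * C * K / s^2 := by ring
    linarith
  calc s * E ≤ s * (2 * (1/W) + 4 * C * K / s^2) := mul_le_mul_of_nonneg_left h3 hspos.le
    _ = _ := by field_simp

lemma off {κ : ℤ → ℝ} (hκ : ∀ x, 0 < κ x) {C : ℝ} (hC0 : 0 ≤ C)
    (hC : ∀ k : ℕ, ∑ i ∈ Finset.range k, 1 / κ i ≤ C * k)
    (hC' : ∀ k : ℕ, ∑ i ∈ Finset.range k, 1 / κ (-1 - i) ≤ C * k)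
    (n : ℕ) (x : ℤ) (hx : Even x) (hxs : |(x:ℝ)| < Real.sqrt (2*n)) :
    Real.sqrt (2*n) * heatK κ (2*n) x ≤ Real.sqrt (2*n) * heatK κ (2*n) 0 +
      Real.sqrt (2 * C * (Real.sqrt (2*n) * heatK κ (2*n) 0)) := by
  have hD := DD_nonneg hκ (2*n)
  have hDD := DD_le hκ n
  have hE := heat_nonneg hκ (2*n) 0
  have key : (heatK κ (2*n) x - heatK κ (2*n) 0)^2 ≤ C * |(x:ℝ)| * DD κ (2*n) := by
    obtain ⟨y, hy⟩ := hx
    rcases le_total 0 y with h0 | h0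
    · obtain ⟨k, rfl⟩ := Int.eq_ofNat_of_zero_le h0
      have h := osc hκ (2*n) 0 k
      simp only [zero_add] at h
      have hxk : x = 2 * (k:ℤ) := by omega
      have habs : |(x:ℝ)| = ((2*k : ℕ):ℝ) := by rw [hxk]; push_cast; exact abs_of_nonneg (by positivity)
      rw [habs, hxk]
      exact h.trans (mul_le_mul_of_nonneg_right (hC _) hD)
    · obtain ⟨k, hk⟩ := Int.eq_ofNat_of_zero_le (neg_nonneg.mpr h0)
      have hxk : x = - (2 * (k:ℤ)) := by omega
      have h := osc hκ (2*n) x k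
      have hz : x + 2 * (k:ℤ) = 0 := by omega
      rw [hz] at h
      have habs : |(x:ℝ)| = ((2*k : ℕ):ℝ) := by
        rw [hxk]; push_cast; rw [abs_neg]; exact abs_of_nonneg (by positivity)
      have hr : ∑ i ∈ Finset.range (2*k), 1 / κ (x+i) = ∑ i ∈ Finset.range (2*k), 1 / κ (-1-i) := by
        rw [← Finset.sum_range_reflect]
        apply Finset.sum_congr rfl
        intro i hi
        have := Finset.mem_range.mp hi
        congr 2
        omega
      rw [hr] at h
      rw [habs, ← neg_sub, neg_sq]
      exact h.trans (mul_le_mul_of_nonneg_right (hC' _) hD)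
  set s := Real.sqrt (2*n) with hs
  have hs2 : s^2 = 2*n := Real.sq_sqrt (by positivity)
  have hs0 : 0 ≤ s := Real.sqrt_nonneg _
  set E := heatK κ (2*n) 0
  set D := DD κ (2*n)
  have h1 : (s * (heatK κ (2*n) x - E))^2 ≤ 2 * C * (s * E) := by
    rw [mul_pow]
    calc s^2 * (heatK κ (2*n) x - E)^2 ≤ s^2 * (C * |(x:ℝ)| * D) := mul_le_mul_of_nonneg_left key (by positivity)
      _ ≤ s^2 * (C * s * D) := by gcongr
      _ = 2 * C * s * (n * D) := by rw [hs2]; ring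
      _ ≤ 2 * C * s * E := mul_le_mul_of_nonneg_left hDD (by positivity)
      _ = _ := by ring
  have := Real.le_sqrt_of_sq_le h1
  linarith

lemma C_pos {κ : ℤ → ℝ} (hκ : ∀ x, 0 < κ x) {C : ℝ}
    (hC : ∀ k : ℕ, ∑ i ∈ Finset.range k, 1 / κ i ≤ C * k) : 0 < C := by
  have := hC 1
  simp at this
  exact (inv_pos.mpr (hκ 0)).trans_le this

lemma det_bdd {κ : ℤ → ℝ} (hκ : ∀ x, 0 < κ x) {C : ℝ}
    (hC : ∀ k : ℕ, ∑ i ∈ Finset.range k, 1 / κ i ≤ C * k)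
    (hC' : ∀ k : ℕ, ∑ i ∈ Finset.range k, 1 / κ (-1 - i) ≤ C * k) :
    ∃ M : ℝ, ∀ n : ℕ, ∀ x : ℤ, Even x → |(x : ℝ)| < Real.sqrt (2 * n) →
        Real.sqrt (2 * n) * heatK κ (2 * n) x ≤ M := by
  have hC0 := C_pos hκ hC
  refine ⟨10 * C + Real.sqrt (2 * C * (10 * C)), fun n x hx hxs => ?_⟩
  have hn : 1 ≤ n := by
    by_contra hcon
    have : n = 0 := by omega
    subst this
    simp at hxs
    exact absurd hxs (not_lt.mpr (abs_nonneg _))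
  have hn' : (1:ℝ) ≤ n := by exact_mod_cast hn
  have h := off hκ hC0.le hC hC' n x hx hxs
  have hs1 : 1 ≤ Real.sqrt (2*n) := Real.one_le_sqrt.mpr (by linarith)
  have hK : 1 ≤ ⌈Real.sqrt (2*n)⌉₊ := Nat.one_le_ceil_iff.mpr (by linarith)
  have he := e_bound hκ hC0.le hC n ⌈Real.sqrt (2*n)⌉₊ hn hK
  have hK1 := Nat.le_ceil (Real.sqrt (2*n))
  have hK2 := Nat.ceil_lt_add_one (Real.sqrt_nonneg (2*n))
  set s := Real.sqrt (2*n)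
  set K := ⌈s⌉₊
  set W := ∑ i ∈ Finset.range K, κ i with hW
  have hKpos : (0:ℝ) < K := by linarith
  have hWpos : 0 < W := Finset.sum_pos (fun i _ => hκ _) (by simpa using (by omega : K ≠ 0))
  have hcs : (K:ℝ)^2 ≤ W * (C * K) := by
    have h1 : (∑ i ∈ Finset.range K, (1:ℝ))^2 ≤ W * ∑ i ∈ Finset.range K, 1 / κ i := by
      apply Finset.sum_sq_le_sum_mul_sum_of_sq_le_mul
      · intro i _; exact (hκ _).le
      · intro i _; exact (one_div_pos.mpr (hκ _)).le
      · intro i _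
        have := (hκ i).ne'
        apply le_of_eq
        field_simp
    simp only [Finset.sum_const, Finset.card_range, nsmul_eq_mul, mul_one] at h1
    exact h1.trans (mul_le_mul_of_nonneg_left (hC K) hWpos.le)
  have hKW : (K:ℝ) ≤ C * W := by nlinarith
  have a1 : s / W ≤ C := by rw [div_le_iff₀ hWpos]; linarith
  have a2 : K / s ≤ 2 := by rw [div_le_iff₀ (by linarith)]; linarith
  have he' : s * heatK κ (2*n) 0 ≤ 10 * C := by
    have := mul_le_mul_of_nonneg_left a2 (by positivity : 0 ≤ 4 * C)
    linarith
  have : Real.sqrt (2 * C * (s * heatK κ (2*n) 0)) ≤ Real.sqrt (2 * C * (10 * C)) := by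
    apply Real.sqrt_le_sqrt
    exact mul_le_mul_of_nonneg_left he' (by positivity)
  linarith

lemma det_zero {κ : ℤ → ℝ} (hκ : ∀ x, 0 < κ x) {C : ℝ}
    (hC : ∀ k : ℕ, ∑ i ∈ Finset.range k, 1 / κ i ≤ C * k)
    (hC' : ∀ k : ℕ, ∑ i ∈ Finset.range k, 1 / κ (-1 - i) ≤ C * k)
    (hW : ∀ A : ℝ, ∃ K0 : ℕ, ∀ K : ℕ, K0 ≤ K → A * K ≤ ∑ i ∈ Finset.range K, κ i) :
    ∀ ε : ℝ, 0 < ε → ∃ N : ℕ, ∀ n : ℕ, N ≤ n →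
          ∀ x : ℤ, Even x → |(x : ℝ)| < Real.sqrt (2 * n) →
            Real.sqrt (2 * n) * heatK κ (2 * n) x < ε := by
  intro ε hε
  have hC0 := C_pos hκ hC
  set η := min (ε/4) (ε^2/(32*C)) with hη
  have hη0 : 0 < η := by positivity
  have hη1 : η ≤ ε/4 := min_le_left _ _
  have hη2 : Real.sqrt (2 * C * η) ≤ ε/4 := by
    apply Real.sqrt_le_iff.mpr
    refine ⟨by positivity, ?_⟩
    calc 2 * C * η ≤ 2 * C * (ε^2/(32*C)) := mul_le_mul_of_nonneg_left (min_le_right _ _) (by positivity)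
      _ = (ε/4)^2 := by field_simp; norm_num
  obtain ⟨δ, hδ0, hδ⟩ : ∃ δ : ℝ, 0 < δ ∧ (2 + 8*C) * δ = η :=
    ⟨η/(2+8*C), by positivity, by field_simp⟩
  obtain ⟨K0, hK0⟩ := hW (1/δ^2)
  set Y := (1 + K0) / δ with hY
  have hYpos : 0 < Y := by positivity
  refine ⟨⌈Y^2⌉₊, fun n hn x hx hxs => ?_⟩
  have hnY : Y^2 ≤ n := (Nat.le_ceil _).trans (by exact_mod_cast hn)
  have hn0 : (0:ℝ) < n := lt_of_lt_of_le (by positivity) hnY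
  have hn1 : 1 ≤ n := by exact_mod_cast hn0
  have hsY : Y ≤ Real.sqrt (2*n) := Real.le_sqrt_of_sq_le (by linarith)
  have h := off hκ hC0.le hC hC' n x hx hxs
  have hds : 1 + K0 ≤ δ * Real.sqrt (2*n) := by
    rw [hY, div_le_iff₀ hδ0] at hsY; linarith
  set s := Real.sqrt (2*n)
  have hs0 : 0 < s := by linarith
  have hK1 := Nat.le_ceil (δ * s)
  have hK2 := Nat.ceil_lt_add_one (a := δ * s) (by positivity)
  set K := ⌈δ * s⌉₊
  have hKK0' : (1:ℝ) + K0 ≤ K := by linarith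
  have hKK0 : 1 + K0 ≤ K := by exact_mod_cast hKK0'
  have he := e_bound hκ hC0.le hC n K hn1 (by omega)
  have hWK := hK0 K (by omega)
  set W := ∑ i ∈ Finset.range K, κ i with hW
  have hWpos : 0 < W := Finset.sum_pos (fun i _ => hκ _) (by simpa using (by omega : K ≠ 0))
  have a1 : s / W ≤ δ := by
    rw [div_le_iff₀ hWpos]
    have : 1/δ^2 * (δ * s) ≤ W := (mul_le_mul_of_nonneg_left hK1 (by positivity)).trans hWK
    calc s = δ * (1/δ^2 * (δ * s)) := by field_simp
      _ ≤ _ := mul_le_mul_of_nonneg_left this hδ0.le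
  have a2 : K / s ≤ 2 * δ := by 
    rw [div_le_iff₀ hs0]
    have : (0:ℝ) ≤ K0 := by positivity
    linarith
  have he' : s * heatK κ (2*n) 0 ≤ η := by
    have := mul_le_mul_of_nonneg_left a2 (by positivity : 0 ≤ 4 * C)
    have e3 : s * heatK κ (2*n) 0 ≤ 2 * (s / W) + 4 * C * (K / s) := he
    linarith
  have : Real.sqrt (2 * C * (s * heatK κ (2*n) 0)) ≤ Real.sqrt (2 * C * η) := by
    apply Real.sqrt_le_sqrt
    exact mul_le_mul_of_nonneg_left he' (by positivity)
  linarith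

section erg
variable {Ω : Type*} [MeasurableSpace Ω]

/-- Garsia's running maximum. -/
noncomputable def gmax (T : Ω → Ω) (f : Ω → ℝ) : ℕ → Ω → ℝ
  | 0 => fun _ => 0
  | (n+1) => fun ω => max 0 (f ω + gmax T f n (T ω))

lemma gmax_nonneg (T : Ω → Ω) (f : Ω → ℝ) (n : ℕ) (ω : Ω) : 0 ≤ gmax T f n ω := by
  cases n with
  | zero => simp [gmax]
  | succ n => simp [gmax]

lemma gmax_mono (T : Ω → Ω) (f : Ω → ℝ) (n : ℕ) (ω : Ω) : gmax T f n ω ≤ gmax T f (n+1) ω := by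
  induction n generalizing ω with
  | zero => simp [gmax]
  | succ n ih =>
    simp only [gmax] at ih ⊢
    exact max_le_max le_rfl (add_le_add le_rfl (ih _))

lemma birkhoff_le_gmax (T : Ω → Ω) (f : Ω → ℝ) (n : ℕ) (ω : Ω) : birkhoffSum T f n ω ≤ gmax T f n ω := by
  induction n generalizing ω with
  | zero => simp [gmax]
  | succ n ih =>
    rw [birkhoffSum_succ', gmax]
    exact le_max_of_le_right (add_le_add le_rfl (ih _))

lemma gmax_integrable {μ : Measure Ω} [IsFiniteMeasure μ] {T : Ω → Ω} (hT : MeasurePreserving T μ μ) {f : Ω → ℝ}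
    (hf : Integrable f μ) (n : ℕ) : Integrable (gmax T f n) μ := by
  induction n with
  | zero => simp [gmax]
  | succ n ih =>
    simp only [gmax]
    exact (integrable_const (0:ℝ)).sup (hf.add (hT.integrable_comp_of_integrable ih))

lemma gmax_measurable {T : Ω → Ω} (hT : Measurable T) {f : Ω → ℝ}
    (hf : Measurable f) (n : ℕ) : Measurable (gmax T f n) := by
  induction n with
  | zero => simp only [gmax]; fun_prop
  | succ n ih =>
    simp only [gmax]
    exact measurable_const.max (hf.add (ih.comp hT))

lemma maximal {μ : Measure Ω} [IsFiniteMeasure μ] {T : Ω → Ω} (hT : MeasurePreserving T μ μ) {f : Ω → ℝ}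
    (hfm : Measurable f) (hf : Integrable f μ) (h : ∀ᵐ ω ∂μ, ∃ n, 0 < birkhoffSum T f n ω) : 0 ≤ ∫ ω, f ω ∂μ := by
  set s : ℕ → Set Ω := fun n => {ω | 0 < gmax T f n ω} with hs
  have hsm : ∀ n, MeasurableSet (s n) := fun n =>
    measurableSet_lt measurable_const (gmax_measurable hT.measurable hfm n)
  have hmono : Monotone s := by
    apply monotone_nat_of_le_succ
    intro n ω hω
    exact lt_of_lt_of_le hω (gmax_mono T f n ω)
  have hpos : ∀ n, 0 ≤ ∫ ω in s n, f ω ∂μ := by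
    intro n
    have hg := gmax_integrable hT hf n
    have hgT : Integrable (fun ω => gmax T f n (T ω)) μ := hT.integrable_comp_of_integrable hg
    have hle : ∀ ω, gmax T f n ω ≤ (s n).indicator f ω + gmax T f n (T ω) := by
      intro ω
      by_cases hω : ω ∈ s n
      · rw [Set.indicator_of_mem hω]
        have hω' : 0 < gmax T f n ω := hω
        cases n with
        | zero => simp [gmax] at hω'
        | succ n =>
          have := gmax_mono T f n (T ω)
          have e : gmax T f (n+1) ω = max 0 (f ω + gmax T f n (T ω)) := rfl
          rw [e] at hω' ⊢
          rcases le_total 0 (f ω + gmax T f n (T ω)) with h0 | h0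
          · rw [max_eq_right h0]; linarith
          · rw [max_eq_left h0] at hω'; exact absurd hω' (lt_irrefl _)
      · rw [Set.indicator_of_notMem hω]
        have : gmax T f n ω ≤ 0 := not_lt.mp hω
        linarith [gmax_nonneg T f n (T ω)]
    have hi := integral_mono hg ((hf.indicator (hsm n)).add hgT) hle
    simp only [Pi.add_apply] at hi
    rw [integral_add (hf.indicator (hsm n)) hgT, integral_indicator (hsm n)] at hi
    have hcomp : ∫ ω, gmax T f n (T ω) ∂μ = ∫ ω, gmax T f n ω ∂μ := by
      have := integral_map (μ := μ) hT.measurable.aemeasurable (f := gmax T f n)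
        (by rw [hT.map_eq]; exact hg.aestronglyMeasurable)
      rw [hT.map_eq] at this
      exact this.symm
    linarith
  have hlim := tendsto_setIntegral_of_monotone (μ := μ) (f := f) hsm hmono hf.integrableOn
  have hU : ∫ ω in (⋃ n, s n), f ω ∂μ = ∫ ω, f ω ∂μ := by
    have : (⋃ n, s n) =ᵐ[μ] Set.univ := by
      rw [Filter.eventuallyEq_univ]
      filter_upwards [h] with ω hω
      obtain ⟨n, hn⟩ := hω
      exact Set.mem_iUnion.mpr ⟨n, lt_of_lt_of_le hn (birkhoff_le_gmax T f n ω)⟩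
    rw [setIntegral_congr_set this, Measure.restrict_univ]
  rw [hU] at hlim
  exact ge_of_tendsto' hlim hpos

lemma birkhoff_measurable {T : Ω → Ω} (hT : Measurable T) {f : Ω → ℝ}
    (hf : Measurable f) (n : ℕ) : Measurable (birkhoffSum T f n) := by
  induction n with
  | zero => simp only [birkhoffSum_zero']; exact measurable_const
  | succ n ih =>
    have : birkhoffSum T f (n+1) = fun ω => f ω + birkhoffSum T f n (T ω) := by
      ext ω; exact birkhoffSum_succ' _ _ _ _
    rw [this]
    exact hf.add (ih.comp hT)

/-- One-sided ergodic theorem. -/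
lemma erg_bdd {μ : Measure Ω} [IsProbabilityMeasure μ] {T : Ω → Ω} (hT : Ergodic T μ) {f : Ω → ℝ}
    (hfm : Measurable f) (hf : Integrable f μ) (hneg : ∫ ω, f ω ∂μ < 0) :
    ∀ᵐ ω ∂μ, ∃ M : ℝ, ∀ n, birkhoffSum T f n ω ≤ M := by
  set B : Set Ω := {ω | BddAbove (Set.range fun n => birkhoffSum T f n ω)} with hB
  have hBm : MeasurableSet B := measurableSet_bddAbove_range (birkhoff_measurable hT.measurable hfm)
  have hinv : T ⁻¹' B = B := by
    ext ω
    simp only [hB, Set.mem_preimage, Set.mem_setOf_eq]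
    constructor
    · rintro ⟨M, hM⟩
      refine ⟨max 0 (f ω + M), ?_⟩
      rintro _ ⟨n, rfl⟩
      cases n with
      | zero => simp
      | succ n =>
        have := hM ⟨n, rfl⟩
        simp only at this ⊢
        rw [birkhoffSum_succ']
        exact le_max_of_le_right (by linarith)
    · rintro ⟨M, hM⟩
      refine ⟨M - f ω, ?_⟩
      rintro _ ⟨n, rfl⟩
      have := hM ⟨n+1, rfl⟩
      simp only at this ⊢
      rw [birkhoffSum_succ'] at this
      linarith
  rcases hT.toPreErgodic.ae_mem_or_ae_notMem hBm hinv with h | h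
  · filter_upwards [h] with ω hω
    obtain ⟨M, hM⟩ := hω
    exact ⟨M, fun n => hM ⟨n, rfl⟩⟩
  · exfalso
    have := maximal hT.toMeasurePreserving hfm hf (by
      filter_upwards [h] with ω hω
      by_contra hcon
      push Not at hcon
      apply hω
      refine ⟨0, ?_⟩
      rintro _ ⟨n, rfl⟩
      exact hcon n)
    linarith

/-- Linear upper bound on Birkhoff sums. -/
lemma erg_upper {μ : Measure Ω} [IsProbabilityMeasure μ] {T : Ω → Ω} (hT : Ergodic T μ) {f : Ω → ℝ}
    (hfm : Measurable f) (hf : Integrable f μ) :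
    ∀ᵐ ω ∂μ, ∃ C : ℝ, ∀ k : ℕ, ∑ i ∈ Finset.range k, f (T^[i] ω) ≤ C * k := by
  set K := ∫ ω, f ω ∂μ + 1 with hK
  have := erg_bdd hT (f := fun ω => f ω - K) (hfm.sub_const _) (hf.sub (integrable_const _)) (by
    rw [integral_sub hf (integrable_const _)]; simp [hK])
  filter_upwards [this] with ω hω
  obtain ⟨M, hM⟩ := hω
  refine ⟨|M| + K, fun k => ?_⟩
  have h := hM k
  simp only [birkhoffSum, Finset.sum_sub_distrib, Finset.sum_const, Finset.card_range, nsmul_eq_mul] at h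
  rcases Nat.eq_zero_or_pos k with rfl | hk
  · simp
  · have hk' : (1:ℝ) ≤ k := by exact_mod_cast hk
    have := le_abs_self M
    nlinarith [abs_nonneg M]

lemma erg_lower {μ : Measure Ω} [IsProbabilityMeasure μ] {T : Ω → Ω} (hT : Ergodic T μ) {c : Ω → ℝ}
    (hcm : Measurable c) (hc0 : ∀ ω, 0 < c ω) (htop : ∫⁻ ω, ENNReal.ofReal (c ω) ∂μ = ⊤) (A : ℝ) :
    ∀ᵐ ω ∂μ, ∃ M : ℝ, ∀ k : ℕ, A * k - M ≤ ∑ i ∈ Finset.range k, c (T^[i] ω) := by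
  have hint : ∀ m : ℕ, Integrable (fun ω => min (c ω) m) μ := by
    intro m
    apply Integrable.of_bound (C := m) (hcm.min measurable_const).aestronglyMeasurable
    filter_upwards with ω
    rw [Real.norm_eq_abs, abs_of_nonneg (le_min (hc0 ω).le (by positivity))]
    exact min_le_right _ _
  obtain ⟨m, hm⟩ : ∃ m : ℕ, A < ∫ ω, min (c ω) m ∂μ := by
    have hsup : ∫⁻ ω, ENNReal.ofReal (c ω) ∂μ = ⨆ m : ℕ, ∫⁻ ω, ENNReal.ofReal (min (c ω) m) ∂μ := by
      rw [← lintegral_iSup]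
      · congr 1; ext ω
        apply le_antisymm
        · obtain ⟨m, hm⟩ := exists_nat_ge (c ω)
          refine le_iSup_of_le m ?_
          rw [min_eq_left hm]
        · exact iSup_le fun m => ENNReal.ofReal_le_ofReal (min_le_left _ _)
      · intro m; exact (hcm.min measurable_const).ennreal_ofReal
      · intro a b hab ω
        apply ENNReal.ofReal_le_ofReal
        exact min_le_min le_rfl (by exact_mod_cast hab)
    rw [htop] at hsup
    have hlt : ENNReal.ofReal A < ⨆ m : ℕ, ∫⁻ ω, ENNReal.ofReal (min (c ω) m) ∂μ := by
      rw [← hsup]; exact ENNReal.ofReal_lt_top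
    obtain ⟨m, hm⟩ := lt_iSup_iff.mp hlt
    refine ⟨m, ?_⟩
    rw [← ofReal_integral_eq_lintegral_ofReal (hint m) 
      (by filter_upwards with ω; exact le_min (hc0 ω).le (by positivity))] at hm
    exact lt_of_not_ge fun hge => absurd (ENNReal.ofReal_le_ofReal hge) (not_le.mpr hm)
  have := erg_bdd hT (f := fun ω => A - min (c ω) m) (measurable_const.sub (hcm.min measurable_const))
    ((integrable_const _).sub (hint m)) (by
      rw [integral_sub (integrable_const _) (hint m)]; simp; exact hm)
  filter_upwards [this] with ω hω
  obtain ⟨M, hM⟩ := hω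
  refine ⟨M, fun k => ?_⟩
  have h := hM k
  simp only [birkhoffSum, Finset.sum_sub_distrib, Finset.sum_const, Finset.card_range, nsmul_eq_mul] at h
  have : ∑ i ∈ Finset.range k, min (c (T^[i] ω)) m ≤ ∑ i ∈ Finset.range k, c (T^[i] ω) :=
    Finset.sum_le_sum fun i _ => min_le_left _ _
  linarith

end erg

end HK

/-- Uniform off-diagonal bound: a.s. the sequence
`√(2n)·max_{x∈B(0,√(2n))∩2ℤ} P_0^ω[S_{2n}=x]/c̄(x)` is bounded in `n`, and it
converges to `0` when moreover `∫c̄ dμ = ∞`. -/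
theorem uniform_heat_kernel_bound {Ω : Type*} [MeasurableSpace Ω]
    (μ : Measure Ω) [IsProbabilityMeasure μ]
    (T : Equiv.Perm Ω) (hT : Ergodic T μ)
    (hTsymm : MeasurePreserving T.symm μ μ)
    (c : Ω → ℝ) (hc : Measurable c) (hcpos : ∀ ω, 0 < c ω)
    (hres : Integrable (fun ω => 1 / c ω) μ) :
    (∀ᵐ ω ∂μ, ∃ M : ℝ, ∀ n : ℕ, ∀ x : ℤ, Even x →
      |(x : ℝ)| < Real.sqrt (2 * n) →
        Real.sqrt (2 * n) * heatK (envC T c ω) (2 * n) x ≤ M)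
    ∧ ((∫⁻ ω, ENNReal.ofReal (c (T.symm ω) + c ω) ∂μ = ⊤) →
        ∀ᵐ ω ∂μ, ∀ ε : ℝ, 0 < ε → ∃ N : ℕ, ∀ n : ℕ, N ≤ n →
          ∀ x : ℤ, Even x → |(x : ℝ)| < Real.sqrt (2 * n) →
            Real.sqrt (2 * n) * heatK (envC T c ω) (2 * n) x < ε) := by
  have hκ : ∀ ω x, 0 < envC T c ω x := fun ω x => hcpos _
  let Te : Ω ≃ᵐ Ω := { toEquiv := T, measurable_toFun := hT.measurable, measurable_invFun := hTsymm.measurable }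
  have hTs : Ergodic T.symm μ := Ergodic.symm (e := Te) hT
  have e1 : ∀ ω (i : ℕ), envC T c ω (i:ℤ) = c (T^[i] ω) := by
    intro ω i
    rw [envC, zpow_natCast, Equiv.Perm.iterate_eq_pow]
  have e2 : ∀ ω (i : ℕ), envC T c ω (-1 - (i:ℤ)) = c (T.symm (T.symm^[i] ω)) := by
    intro ω i
    have h : (-1 - (i:ℤ)) = -((i+1 : ℕ) : ℤ) := by push_cast; ring
    rw [envC, h, zpow_neg, zpow_natCast, ← inv_pow, ← Function.iterate_succ_apply' (T.symm),
      Equiv.Perm.iterate_eq_pow]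
    rfl
  have hm : Measurable fun ω => 1 / c ω := by fun_prop
  have A1 := HK.erg_upper hT hm hres
  have A2 := HK.erg_upper hTs (hm.comp hTsymm.measurable) (hTsymm.integrable_comp_of_integrable hres)
  have A3 : ∀ᵐ ω ∂μ, ∃ C : ℝ, (∀ k : ℕ, ∑ i ∈ Finset.range k, 1 / envC T c ω i ≤ C * k) ∧
      (∀ k : ℕ, ∑ i ∈ Finset.range k, 1 / envC T c ω (-1 - i) ≤ C * k) := by
    filter_upwards [A1, A2] with ω h1 h2
    obtain ⟨C1, h1⟩ := h1
    obtain ⟨C2, h2⟩ := h2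
    refine ⟨max C1 C2, fun k => ?_, fun k => ?_⟩
    · simp_rw [e1]
      exact (h1 k).trans (mul_le_mul_of_nonneg_right (le_max_left _ _) (by positivity))
    · simp_rw [e2]
      exact (h2 k).trans (mul_le_mul_of_nonneg_right (le_max_right _ _) (by positivity))
  constructor
  · filter_upwards [A3] with ω h
    obtain ⟨C, h1, h2⟩ := h
    exact HK.det_bdd (hκ ω) h1 h2
  · intro htop
    have htop' : ∫⁻ ω, ENNReal.ofReal (c ω) ∂μ = ⊤ := by
      have h1 : ∀ ω, ENNReal.ofReal (c (T.symm ω) + c ω) =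
          ENNReal.ofReal (c (T.symm ω)) + ENNReal.ofReal (c ω) := fun ω =>
        ENNReal.ofReal_add (hcpos _).le (hcpos _).le
      simp_rw [h1] at htop
      rw [lintegral_add_right _ hc.ennreal_ofReal,
        hTsymm.lintegral_comp (f := fun ω => ENNReal.ofReal (c ω)) hc.ennreal_ofReal] at htop
      simpa using htop
    have A4 : ∀ᵐ ω ∂μ, ∀ A : ℕ, ∃ M : ℝ, ∀ k : ℕ, (A:ℝ) * k - M ≤ ∑ i ∈ Finset.range k, c (T^[i] ω) :=
      ae_all_iff.mpr fun A => HK.erg_lower hT hc hcpos htop' A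
    filter_upwards [A3, A4] with ω h h4
    obtain ⟨C, h1, h2⟩ := h
    refine HK.det_zero (hκ ω) h1 h2 ?_
    intro A
    simp_rw [e1]
    obtain ⟨a, ha⟩ := exists_nat_ge (A + 1)
    obtain ⟨M, hM⟩ := h4 a
    obtain ⟨K0, hK0⟩ := exists_nat_ge M
    refine ⟨K0, fun K hK => le_trans ?_ (hM K)⟩
    have : (K0:ℝ) ≤ K := by exact_mod_cast hK
    have h0 : (0:ℝ) ≤ K := by positivity
    nlinarith
end
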